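/- If G is a connected well-covered unicyclic graph of order 2n with n ≥ 3, then ξ(C_n*) ≤ ξ(G) ≤ ξ(U_n*). -/

import Mathlib

open Polynomial SimpleGraph

/-- A finset of vertices is independent: pairwise nonadjacent. -/
def IsIndepFinset {V : Type*} (G : SimpleGraph V) (s : Finset V) : Prop :=
  ∀ u ∈ s, ∀ v ∈ s, ¬ G.Adj u v

open Classical in
/-- The independence polynomial of a finite graph, with real coefficients. -/
noncomputable def indepPoly {V : Type*} [Fintype V] (G : SimpleGraph V) : Polynomial ℝ :=
  ∑ s : Finset V, if IsIndepFinset G s then (X : Polynomial ℝ) ^ s.card else 0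

/-- `xi G` : the largest real root of the independence polynomial of `G`. -/
noncomputable def xi {V : Type*} [Fintype V] (G : SimpleGraph V) : ℝ :=
  sSup {x : ℝ | (indepPoly G).eval x = 0}

/-- `Pre H G` (`H ⪯ G`) : `I(H,x) ≥ I(G,x)` for all `x ∈ [ξ(G), 0]`. -/
def Pre {V W : Type*} [Fintype V] [Fintype W] (H : SimpleGraph W) (G : SimpleGraph V) : Prop :=
  ∀ x ∈ Set.Icc (xi G) 0, (indepPoly G).eval x ≤ (indepPoly H).eval x

/-- `SPre H G` (`H ≺ G`). -/
def SPre {V W : Type*} [Fintype V] [Fintype W] (H : SimpleGraph W) (G : SimpleGraph V) : Prop :=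
  Pre H G ∧ indepPoly H ≠ indepPoly G

open Classical in
/-- A graph is well-covered if all maximal independent sets have the same size. -/
def WellCovered {V : Type*} (G : SimpleGraph V) : Prop :=
  ∀ s t : Finset V,
    IsIndepFinset G s → (∀ v ∉ s, ¬ IsIndepFinset G (insert v s)) →
    IsIndepFinset G t → (∀ v ∉ t, ¬ IsIndepFinset G (insert v t)) →
    s.card = t.card

/-- A connected unicyclic graph: connected with as many edges as vertices. -/
def Unicyclic {V : Type*} [Fintype V] (G : SimpleGraph V) : Prop :=
  G.Connected ∧ G.edgeSet.ncard = Fintype.card V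

/-- The graph star (corona with `K₁`) of `G`: each vertex `inl v` gets a pendant
vertex `inr v`. -/
def corona {V : Type*} (G : SimpleGraph V) : SimpleGraph (V ⊕ V) :=
  SimpleGraph.fromRel (fun a b =>
    match a, b with
    | Sum.inl u, Sum.inl v => G.Adj u v
    | Sum.inl u, Sum.inr v => u = v
    | _, _ => False)

/-- `Ugraph n` (`U_n`, `n ≥ 3`): a triangle `0,1,2` with `n - 3` pendant vertices attached
to vertex `0`. -/
def Ugraph (n : ℕ) : SimpleGraph (Fin n) :=
  SimpleGraph.fromRel (fun i j => i.val = 0 ∨ (i.val = 1 ∧ j.val = 2))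

/-- `Dgraph n` (`D_n`, `n ≥ 4`): a path `0,1,...,n-1` plus the chord `{0,2}`, i.e. a
triangle with a path on `n - 3` vertices attached. -/
def Dgraph (n : ℕ) : SimpleGraph (Fin n) :=
  SimpleGraph.fromRel (fun i j => j.val = i.val + 1 ∨ (i.val = 0 ∧ j.val = 2))

/-- `starGraph n` (`S_n = K_{1,n-1}`): vertex `0` adjacent to all other vertices. -/
def starGraph (n : ℕ) : SimpleGraph (Fin n) :=
  SimpleGraph.fromRel (fun i _ => i.val = 0)

/-- `Mgraph n` (`M_n`, odd `n ≥ 5`): a triangle `0,1,2` with `(n-3)/2` paths of length two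
attached at vertex `0`; the middle vertices are the odd indices `3,5,...,n-2` and the leaf
attached to middle vertex `i` is `i + 1`. -/
def Mgraph (n : ℕ) : SimpleGraph (Fin n) :=
  SimpleGraph.fromRel (fun i j =>
    (i.val = 0 ∧ (j.val ≤ 2 ∨ j.val % 2 = 1)) ∨ (i.val = 1 ∧ j.val = 2) ∨
    (i.val % 2 = 1 ∧ 3 ≤ i.val ∧ j.val = i.val + 1))

/-- `SPgraph g k ℓ` (`G(g,k,ℓ)`, for `g ∈ {3,5}` and `k + ℓ ≥ 1`): a cycle on the vertices
`0,...,g-1`, a copy of `P_k*` on the vertices `g,...,g+2k-1` (path vertices at even offsets,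
each followed by its pendant vertex) joined to the cycle vertex `0` by an edge to the
path end `g`, and a copy of `P_ℓ*` on the vertices `g+2k,...,g+2k+2ℓ-1` joined to the cycle
vertex `2` by an edge to the path end `g+2k`. -/
def SPgraph (g k ℓ : ℕ) : SimpleGraph (Fin (g + 2*k + 2*ℓ)) :=
  SimpleGraph.fromRel (fun i j =>
    (i.val < g ∧ j.val < g ∧ (j.val = i.val + 1 ∨ (i.val = 0 ∧ j.val = g - 1))) ∨
    (i.val = 0 ∧ 0 < k ∧ j.val = g) ∨
    (g ≤ i.val ∧ i.val < g + 2*k ∧ (i.val - g) % 2 = 0 ∧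
      (j.val = i.val + 1 ∨ (j.val = i.val + 2 ∧ j.val < g + 2*k))) ∨
    (i.val = 2 ∧ 0 < ℓ ∧ j.val = g + 2*k) ∨
    (g + 2*k ≤ i.val ∧ (i.val - (g + 2*k)) % 2 = 0 ∧
      (j.val = i.val + 1 ∨ j.val = i.val + 2)))

/-- `Gtree n` (`G_{2n}`, `n ≥ 5`): the tree on `2n` vertices with path `v_1 … v_n` at
indices `0,…,n-1`, `z_1` at index `n`, `y_1, y_2` at `n+1, n+2`, `x_1, x_2` at `n+3, n+4`
(with `v_3 z_1`, `v_3 y_1`, `y_1 y_2`, `v_5 x_1`, `x_1 x_2` edges), and pendant vertices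
`w_j` at index `n + j - 1` attached to `v_j` for `6 ≤ j ≤ n`. -/
def Gtree (n : ℕ) : SimpleGraph (Fin (2*n)) :=
  SimpleGraph.fromRel (fun a b =>
    (a.val + 1 = b.val ∧ b.val < n) ∨
    (a.val = 2 ∧ (b.val = n ∨ b.val = n + 1)) ∨
    (a.val = n + 1 ∧ b.val = n + 2) ∨
    (a.val = 4 ∧ b.val = n + 3) ∨
    (a.val = n + 3 ∧ b.val = n + 4) ∨
    (5 ≤ a.val ∧ a.val < n ∧ b.val = n + a.val))

/-!
By the recurrence `I(G) = I(G - v) + x I(G - N[v])`, the polynomials of all induced subgraphs of `G`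
are nonnegative on `[ξ(G), 0]`, so `H ⪯ G` implies `ξ(H) ≤ ξ(G)`. A unicyclic graph with a leaf `w`
loses a leaf when an edge `ub` at the far end `b` of the pendant path from `w` is moved to `uw`, and
the graph goes down in `⪯`; hence `C_n ⪯ G`. Deleting leaves one by one gives `G ⪯ U_n`.
Since `I(G*, x) = (1 + x)^n I(G, x / (1 + x))`, the corona is monotone for `ξ`.

It remains to see that a well-covered unicyclic graph of order `2n ≥ 6` has the independence
polynomial of the corona of a unicyclic graph of order `n`. Such a graph has an independent set of
size `n`, so by Hall's theorem it has a perfect matching, with the property found by Favaron. If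
some matched pair contains no leaf, then it is an edge of a 4-cycle, and it is the only such pair.
Moving one edge of the 4-cycle creates the missing leaf without changing the polynomial.
-/

section

open scoped Classical

variable {V W : Type*}

/-! ### Independence polynomials of vertex subsets -/

/-- The independence polynomial of the subgraph of `G` induced on `A`, evaluated at `x`. Finsets of
vertices of a fixed graph replace induced subgraphs, so that deleting vertices needs no subtypes. -/
noncomputable def indepSum (G : SimpleGraph V) (A : Finset V) (x : ℝ) : ℝ :=
  ∑ S ∈ A.powerset with IsIndepFinset G S, x ^ S.card

lemma isIndepFinset_empty (G : SimpleGraph V) : IsIndepFinset G ∅ := by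
  simp [IsIndepFinset]

lemma IsIndepFinset.mono {G : SimpleGraph V} {S T : Finset V} (hT : IsIndepFinset G T)
    (h : S ⊆ T) : IsIndepFinset G S :=
  fun u hu v hv => hT u (h hu) v (h hv)

lemma isIndepFinset_insert [DecidableEq V] {G : SimpleGraph V} {S : Finset V} {v : V} :
    IsIndepFinset G (insert v S) ↔ IsIndepFinset G S ∧ ∀ u ∈ S, ¬ G.Adj v u := by
  refine ⟨fun h => ⟨h.mono (Finset.subset_insert v S), fun u hu =>
    h v (Finset.mem_insert_self v S) u (Finset.mem_insert_of_mem hu)⟩, fun ⟨hS, hv⟩ a ha b hb => ?_⟩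
  obtain rfl | haS := Finset.mem_insert.1 ha <;> obtain rfl | hbS := Finset.mem_insert.1 hb
  · exact G.irrefl
  · exact hv b hbS
  · exact fun h => hv a haS h.symm
  · exact hS a haS b hbS

lemma isIndepFinset_image [DecidableEq W] {G : SimpleGraph V} {H : SimpleGraph W} {φ : V → W}
    {S : Finset V}
    (h : ∀ u ∈ S, ∀ v ∈ S, G.Adj u v ↔ H.Adj (φ u) (φ v)) :
    IsIndepFinset H (S.image φ) ↔ IsIndepFinset G S := by
  simp only [IsIndepFinset, Finset.forall_mem_image]
  exact forall₂_congr fun u hu => forall₂_congr fun v hv => not_congr (h u hu v hv).symm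

lemma eval_indepPoly [Fintype V] (G : SimpleGraph V) (x : ℝ) :
    (indepPoly G).eval x = indepSum G Finset.univ x := by
  simp only [indepPoly, indepSum, eval_finsetSum, Finset.powerset_univ, Finset.sum_filter]
  refine Finset.sum_congr rfl fun S _ => ?_
  split_ifs <;> simp

lemma indepSum_empty (G : SimpleGraph V) (x : ℝ) : indepSum G ∅ x = 1 := by
  simp [indepSum, Finset.filter_singleton, isIndepFinset_empty]

lemma indepSum_insert [DecidableEq V] (G : SimpleGraph V) {A : Finset V} {v : V} (hv : v ∉ A)
    (x : ℝ) :
    indepSum G (insert v A) x = indepSum G A x + x * indepSum G {u ∈ A | ¬ G.Adj v u} x := by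
  unfold indepSum
  rw [Finset.sum_filter, Finset.sum_powerset_insert hv, ← Finset.sum_filter, ← Finset.sum_filter,
    Finset.mul_sum]
  congr 1
  refine Finset.sum_congr ?_ fun S hS => ?_
  · ext S
    simp only [Finset.mem_filter, Finset.mem_powerset, isIndepFinset_insert, Finset.subset_iff]
    grind
  · have hvS : v ∉ S := fun h =>
      hv (Finset.mem_of_mem_filter v (Finset.mem_powerset.1 (Finset.mem_filter.1 hS).1 h))
    rw [Finset.card_insert_of_notMem hvS, pow_succ']

lemma indepSum_erase [DecidableEq V] (G : SimpleGraph V) {A : Finset V} {v : V} (hv : v ∈ A)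
    (x : ℝ) :
    indepSum G A x =
      indepSum G (A.erase v) x + x * indepSum G {u ∈ A.erase v | ¬ G.Adj v u} x := by
  conv_lhs => rw [← Finset.insert_erase hv]
  exact indepSum_insert G (Finset.notMem_erase v A) x

lemma indepSum_insert_isolated [DecidableEq V] (G : SimpleGraph V) {A : Finset V} {v : V}
    (hv : v ∉ A) (h : ∀ u ∈ A, ¬ G.Adj v u) (x : ℝ) :
    indepSum G (insert v A) x = (1 + x) * indepSum G A x := by
  rw [indepSum_insert G hv, Finset.filter_true_of_mem h]
  ring

lemma indepSum_singleton (G : SimpleGraph V) (v : V) (x : ℝ) : indepSum G {v} x = 1 + x := by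
  simpa [indepSum_empty] using indepSum_insert_isolated G (Finset.notMem_empty v) (by simp) x

lemma indepSum_image [DecidableEq W] {G : SimpleGraph V} {H : SimpleGraph W} {φ : V → W}
    {A : Finset V}
    (hφ : Set.InjOn φ A) (h : ∀ u ∈ A, ∀ v ∈ A, G.Adj u v ↔ H.Adj (φ u) (φ v)) (x : ℝ) :
    indepSum H (A.image φ) x = indepSum G A x := by
  unfold indepSum
  rw [Finset.sum_filter, Finset.sum_filter, Finset.powerset_image,
    Finset.sum_image (Finset.image_injOn_powerset_of_injOn hφ)]
  refine Finset.sum_congr rfl fun S hS => ?_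
  have hSA := Finset.mem_powerset.1 hS
  rw [Finset.card_image_of_injOn (hφ.mono (Finset.coe_subset.2 hSA)),
    isIndepFinset_image fun u hu v hv => h u (hSA hu) v (hSA hv)]

lemma indepSum_congr {G H : SimpleGraph V} {A : Finset V}
    (h : ∀ u ∈ A, ∀ v ∈ A, G.Adj u v ↔ H.Adj u v) (x : ℝ) : indepSum G A x = indepSum H A x := by
  simpa only [Finset.image_id] using (indepSum_image (φ := id) Function.injective_id.injOn h x).symm

lemma indepSum_image_embedding {G : SimpleGraph V} {H : SimpleGraph W} (φ : G ↪g H) (A : Finset V)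
    (x : ℝ) : indepSum H (A.image φ) x = indepSum G A x :=
  indepSum_image φ.injective.injOn (fun _ _ _ _ => φ.map_adj_iff.symm) x

lemma indepPoly_congr [Fintype V] [Fintype W] {G : SimpleGraph V} {H : SimpleGraph W}
    (φ : G ≃g H) : indepPoly G = indepPoly H := by
  refine Polynomial.funext fun x => ?_
  rw [eval_indepPoly, eval_indepPoly, ← indepSum_image_embedding φ.toEmbedding,
    Finset.image_univ_of_surjective (f := φ.toEmbedding) φ.surjective]

lemma indepSum_union [DecidableEq V] {G : SimpleGraph V} {A B : Finset V} (hAB : Disjoint A B)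
    (h : ∀ a ∈ A, ∀ b ∈ B, ¬ G.Adj a b) (x : ℝ) :
    indepSum G (A ∪ B) x = indepSum G A x * indepSum G B x := by
  induction B using Finset.strongInduction generalizing A with
  | H B ih =>
    obtain rfl | ⟨v, hv⟩ := B.eq_empty_or_nonempty
    · simp [indepSum_empty]
    have hvA : v ∉ A := Finset.disjoint_right.1 hAB hv
    have herase : (A ∪ B).erase v = A ∪ B.erase v := by
      rw [Finset.erase_union_distrib, Finset.erase_eq_of_notMem hvA]
    have hfilter : {u ∈ A ∪ B.erase v | ¬ G.Adj v u} = A ∪ {u ∈ B.erase v | ¬ G.Adj v u} := by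
      rw [Finset.filter_union,
        Finset.filter_true_of_mem (p := fun u => ¬ G.Adj v u) fun a ha hva => h a ha v hv hva.symm]
    have hunion : ∀ C ⊆ B.erase v, indepSum G (A ∪ C) x = indepSum G A x * indepSum G C x :=
      fun C hC => ih C (hC.trans_ssubset (Finset.erase_ssubset hv))
        (hAB.mono_right (hC.trans (Finset.erase_subset v B)))
        fun a ha b hb => h a ha b (Finset.mem_of_mem_erase (hC hb))
    rw [indepSum_erase G (Finset.mem_union_right A hv), indepSum_erase G hv, herase, hfilter,
      hunion _ subset_rfl, hunion _ (Finset.filter_subset _ _)]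
    ring

lemma continuous_indepSum (G : SimpleGraph V) (A : Finset V) : Continuous (indepSum G A) := by
  unfold indepSum
  fun_prop

lemma indepSum_pos_of_nonneg (G : SimpleGraph V) (A : Finset V) {x : ℝ} (hx : 0 ≤ x) :
    0 < indepSum G A x :=
  Finset.sum_pos' (fun S _ => by positivity) ⟨∅, by simp [isIndepFinset_empty], by simp⟩

/-! ### Largest roots -/

lemma exists_last_zero {f : ℝ → ℝ} (hf : Continuous f) (h0 : 0 < f 0) {x : ℝ} (hx : x ≤ 0)
    (hfx : f x ≤ 0) : ∃ m ∈ Set.Ico x 0, f m = 0 ∧ ∀ y ∈ Set.Ioc m 0, 0 < f y := by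
  have hcompact : IsCompact (Set.Icc x 0 ∩ {y | f y ≤ 0}) :=
    isCompact_Icc.inter_right (isClosed_le hf continuous_const)
  obtain ⟨m, ⟨⟨hxm, hm0⟩, hfm : f m ≤ 0⟩, hmax⟩ :=
    hcompact.exists_isGreatest ⟨x, ⟨le_rfl, hx⟩, hfx⟩
  have hpos : ∀ y ∈ Set.Ioc m 0, 0 < f y := fun y hy => by
    by_contra! hfy
    exact (hmax ⟨⟨hxm.trans hy.1.le, hy.2⟩, hfy⟩).not_gt hy.1
  have hm : m < 0 := hm0.lt_of_ne fun h => (h ▸ hfm).not_gt h0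
  refine ⟨m, ⟨hxm, hm⟩, ?_, hpos⟩
  obtain ⟨z, hz, hfz⟩ := intermediate_value_Icc hm0 hf.continuousOn ⟨hfm, h0.le⟩
  obtain rfl | hmz := hz.1.eq_or_lt
  · exact hfz
  · exact absurd hfz (hpos z ⟨hmz, hz.2⟩).ne'

lemma nonneg_of_pos_right {f : ℝ → ℝ} (hf : Continuous f) {m b : ℝ} (hmb : m < b)
    (h : ∀ y ∈ Set.Ioo m b, 0 < f y) : 0 ≤ f m := by
  refine ge_of_tendsto (hf.continuousAt.tendsto.mono_left (nhdsWithin_le_nhds (s := Set.Ioi m))) ?_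
  filter_upwards [Ioo_mem_nhdsGT hmb] with y hy using (h y hy).le

/- At the last point `m` where `I(B - v)` vanishes, the recurrence would give `I(B, m) ≤ 0`, since
`I(B - N[v])` is positive to the right of `m` by induction. -/
theorem indepSum_pos_of_subset {G : SimpleGraph V} {A B : Finset V} (hAB : A ⊆ B) {z : ℝ}
    (hB : ∀ x ∈ Set.Icc z 0, 0 < indepSum G B x) : ∀ x ∈ Set.Icc z 0, 0 < indepSum G A x := by
  induction B using Finset.strongInduction generalizing A z with
  | H B ih =>
    obtain rfl | hss := hAB.eq_or_ssubset
    · exact hB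
    obtain ⟨v, hvB, hvA⟩ := Finset.exists_of_ssubset hss
    have hBv := Finset.erase_ssubset hvB
    refine ih _ hBv (Finset.subset_erase.2 ⟨hAB, hvA⟩) fun x hx => ?_
    by_contra! hneg
    obtain ⟨m, hm, hm0, hright⟩ := exists_last_zero (continuous_indepSum G (B.erase v))
      (indepSum_pos_of_nonneg G _ le_rfl) hx.2 hneg
    have hnonneg : 0 ≤ indepSum G {u ∈ B.erase v | ¬ G.Adj v u} m :=
      nonneg_of_pos_right (continuous_indepSum G _) hm.2 fun y hy =>
        ih _ hBv (Finset.filter_subset _ _)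
          (fun t ht => hright t ⟨hy.1.trans_le ht.1, ht.2⟩) y ⟨le_rfl, hy.2.le⟩
    have hBm := hB m ⟨hx.1.trans hm.1, hm.2.le⟩
    rw [indepSum_erase G hvB, hm0] at hBm
    nlinarith [hm.2]

section Fintype

variable [Fintype V] [Fintype W] {G : SimpleGraph V} {H : SimpleGraph W} {A B : Finset V} {x : ℝ}

lemma zero_mem_upperBounds_roots (G : SimpleGraph V) :
    0 ∈ upperBounds {x : ℝ | (indepPoly G).eval x = 0} := fun x hx => by
  by_contra! h0
  exact (indepSum_pos_of_nonneg G _ h0.le).ne' ((eval_indepPoly G x).symm.trans hx)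

lemma exists_root [Nonempty V] (G : SimpleGraph V) : ∃ x, (indepPoly G).eval x = 0 := by
  by_contra! hroot
  obtain ⟨v⟩ := ‹Nonempty V›
  have hpos : ∀ x ∈ Set.Icc (-1 : ℝ) 0, 0 < indepSum G Finset.univ x := fun x hx => by
    by_contra! hneg
    obtain ⟨m, -, hm, -⟩ := exists_last_zero (continuous_indepSum G Finset.univ)
      (indepSum_pos_of_nonneg G _ le_rfl) hx.2 hneg
    exact hroot m ((eval_indepPoly G m).trans hm)
  have := indepSum_pos_of_subset (Finset.subset_univ {v}) hpos (-1) (by simp)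
  rw [indepSum_singleton] at this
  norm_num at this

/- Without a root `xi` would take the junk value `sSup ∅ = 0`. -/
lemma isGreatest_xi [Nonempty V] (G : SimpleGraph V) :
    IsGreatest {x : ℝ | (indepPoly G).eval x = 0} (xi G) := by
  have hbdd : BddAbove {x : ℝ | (indepPoly G).eval x = 0} := ⟨0, zero_mem_upperBounds_roots G⟩
  exact ⟨(isClosed_singleton.preimage (indepPoly G).continuous).csSup_mem (exists_root G) hbdd,
    fun x hx => le_csSup hbdd hx⟩

lemma indepSum_xi [Nonempty V] (G : SimpleGraph V) : indepSum G Finset.univ (xi G) = 0 :=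
  (eval_indepPoly G _).symm.trans (isGreatest_xi G).1

lemma xi_neg [Nonempty V] (G : SimpleGraph V) : xi G < 0 := by
  by_contra! h
  exact (indepSum_pos_of_nonneg G _ h).ne' (indepSum_xi G)

lemma indepSum_pos (hx : xi G < x) (A : Finset V) : 0 < indepSum G A x := by
  obtain hx0 | hx0 := le_total 0 x
  · exact indepSum_pos_of_nonneg G A hx0
  refine indepSum_pos_of_subset (Finset.subset_univ A) (fun y hy => ?_) x ⟨le_rfl, hx0⟩
  by_contra! hneg
  obtain ⟨m, hm, hroot, -⟩ := exists_last_zero (continuous_indepSum G Finset.univ)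
    (indepSum_pos_of_nonneg G _ le_rfl) hy.2 hneg
  have hle : m ≤ xi G :=
    le_csSup ⟨0, zero_mem_upperBounds_roots G⟩ ((eval_indepPoly G m).trans hroot)
  linarith [hy.1, hm.1]

lemma indepSum_nonneg (hx : xi G ≤ x) (A : Finset V) : 0 ≤ indepSum G A x :=
  nonneg_of_pos_right (continuous_indepSum G A) (lt_add_one x) fun _ hy =>
    (indepSum_pos (hx.trans_lt hy.1) A).le.lt_of_ne (indepSum_pos (hx.trans_lt hy.1) A).ne

lemma indepSum_le_of_subset (hx : x ∈ Set.Icc (xi G) 0) (hAB : A ⊆ B) :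
    indepSum G B x ≤ indepSum G A x := by
  have hanti : Antitone fun A => indepSum G A x :=
    Finset.antitone_iff_forall_insert_le.2 fun A v hv => by
      rw [indepSum_insert G hv]
      nlinarith [hx.2, indepSum_nonneg hx.1 {u ∈ A | ¬ G.Adj v u}]
  exact hanti hAB

lemma indepSum_union_insert_le [DecidableEq V] (hx : x ∈ Set.Icc (xi G) 0) (hAB : Disjoint A B)
    (h : ∀ a ∈ A, ∀ b ∈ B, ¬ G.Adj a b) {v : V} (hvA : v ∉ A) (hvB : v ∉ B) :
    indepSum G (A ∪ insert v B) x ≤ indepSum G A x * indepSum G (insert v B) x := by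
  have hfilter : indepSum G {u ∈ A ∪ B | ¬ G.Adj v u} x =
      indepSum G {u ∈ A | ¬ G.Adj v u} x * indepSum G {u ∈ B | ¬ G.Adj v u} x := by
    rw [Finset.filter_union]
    exact indepSum_union (hAB.mono (Finset.filter_subset _ _) (Finset.filter_subset _ _))
      (fun a ha b hb => h a (Finset.mem_of_mem_filter a ha) b (Finset.mem_of_mem_filter b hb)) x
  have hle := indepSum_le_of_subset hx (Finset.filter_subset (fun u => ¬ G.Adj v u) A)
  have hnonneg := indepSum_nonneg hx.1 {u ∈ B | ¬ G.Adj v u}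
  rw [Finset.union_insert, indepSum_insert G (by simp [hvA, hvB]), indepSum_insert G hvB, hfilter,
    indepSum_union hAB h, mul_add, mul_left_comm (indepSum G A x)]
  exact add_le_add le_rfl <| mul_le_mul_of_nonpos_left
    (mul_le_mul_of_nonneg_right hle hnonneg) hx.2

lemma one_add_nonneg_of_xi_le [Nonempty V] (hx : xi G ≤ x) : 0 ≤ 1 + x := by
  obtain ⟨v⟩ := ‹Nonempty V›
  exact indepSum_singleton G v x ▸ indepSum_nonneg hx {v}

lemma indepSum_union_le_pow [DecidableEq V] [Nonempty V] (hx : x ∈ Set.Icc (xi G) 0)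
    (hAB : Disjoint A B) :
    indepSum G (A ∪ B) x ≤ (1 + x) ^ B.card * indepSum G A x := by
  induction B using Finset.induction_on with
  | empty => simp
  | insert v B hvB ih =>
    obtain ⟨hvA, hAB⟩ := Finset.disjoint_insert_right.1 hAB
    have hv := indepSum_union_insert_le (A := A ∪ B) (B := ∅) hx (by simp) (by simp)
      (by simp [hvA, hvB]) (Finset.notMem_empty v)
    calc indepSum G (A ∪ insert v B) x
        ≤ (1 + x) * indepSum G (A ∪ B) x := by
          rwa [insert_empty_eq, indepSum_singleton, mul_comm, Finset.union_singleton,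
            ← Finset.union_insert] at hv
      _ ≤ (1 + x) * ((1 + x) ^ B.card * indepSum G A x) :=
          mul_le_mul_of_nonneg_left (ih hAB) (one_add_nonneg_of_xi_le hx.1)
      _ = (1 + x) ^ (insert v B).card * indepSum G A x := by
          rw [Finset.card_insert_of_notMem hvB, pow_succ', mul_assoc]

lemma pre_iff :
    Pre H G ↔ ∀ x ∈ Set.Icc (xi G) 0, indepSum G Finset.univ x ≤ indepSum H Finset.univ x := by
  simp only [Pre, eval_indepPoly]

lemma Pre.xi_le [Nonempty W] (h : Pre H G) : xi H ≤ xi G := by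
  by_contra! hlt
  exact ((indepSum_pos hlt Finset.univ).trans_le
    (pre_iff.1 h _ ⟨hlt.le, (xi_neg H).le⟩)).ne' (indepSum_xi H)

lemma Pre.trans {U : Type*} [Fintype U] [Nonempty W] {K : SimpleGraph U} (hKH : Pre K H)
    (hHG : Pre H G) : Pre K G :=
  fun x hx => (hHG x hx).trans (hKH x ⟨hHG.xi_le.trans hx.1, hx.2⟩)

lemma pre_of_embedding (f : H ↪g G) : Pre H G := by
  refine pre_iff.2 fun x hx => ?_
  rw [← indepSum_image_embedding f]
  exact indepSum_le_of_subset hx (Finset.subset_univ _)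

end Fintype

/-! ### Unicyclic graphs -/

section Unicyclic

variable {G : SimpleGraph V}

lemma eq_univ_of_forall_adj_mem (hG : G.Connected) {s : Set V} (hs : s.Nonempty)
    (hadj : ∀ v ∈ s, ∀ w, G.Adj v w → w ∈ s) : s = Set.univ := by
  obtain ⟨u, hu⟩ := hs
  refine Set.eq_univ_of_forall fun v => ?_
  by_contra hv
  obtain ⟨p⟩ := hG.preconnected u v
  obtain ⟨e, -, hfst, hsnd⟩ := p.exists_boundary_dart s hu hv
  exact hsnd (hadj _ hfst _ e.adj)

variable [Fintype V] {v w : V}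

lemma Unicyclic.nonempty (h : Unicyclic G) : Nonempty V := h.1.nonempty

lemma Unicyclic.card_edgeFinset (h : Unicyclic G) : G.edgeFinset.card = Fintype.card V := by
  rw [← h.2, Set.ncard_eq_toFinset_card', edgeFinset]

lemma Unicyclic.not_isAcyclic (h : Unicyclic G) : ¬ G.IsAcyclic := fun hacyclic => by
  have hcard := IsTree.card_edgeFinset ⟨h.1, hacyclic⟩
  rw [h.card_edgeFinset] at hcard
  omega

lemma Unicyclic.three_le_card (h : Unicyclic G) : 3 ≤ Fintype.card V := by
  have hchoose := G.card_edgeFinset_le_card_choose_two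
  have hpos := Fintype.card_pos_iff.2 h.nonempty
  rw [h.card_edgeFinset] at hchoose
  by_contra! hlt
  interval_cases Fintype.card V <;> simp at hchoose

lemma Unicyclic.sum_degrees (h : Unicyclic G) : ∑ v, G.degree v = ∑ _v : V, 2 := by
  rw [G.sum_degrees_eq_twice_card_edges, h.card_edgeFinset, Finset.sum_const, Finset.card_univ,
    smul_eq_mul, mul_comm]

lemma Unicyclic.degree_pos (h : Unicyclic G) (v : V) : 0 < G.degree v :=
  have : Nontrivial V := Fintype.one_lt_card_iff_nontrivial.1 (by linarith [h.three_le_card])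
  h.1.preconnected.degree_pos_of_nontrivial v

lemma Unicyclic.exists_three_le_degree (h : Unicyclic G) (hw : G.degree w = 1) :
    ∃ b, 3 ≤ G.degree b := by
  by_contra! hlt
  exact (Finset.sum_lt_sum (fun v _ => Nat.le_of_lt_succ (hlt v))
    ⟨w, Finset.mem_univ w, by omega⟩).ne h.sum_degrees

lemma Unicyclic.isRegularOfDegree_two (h : Unicyclic G) (hleaf : ∀ v, G.degree v ≠ 1) :
    G.IsRegularOfDegree 2 := fun v => by
  have hle : ∀ v ∈ Finset.univ, 2 ≤ G.degree v := fun v _ => by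
    have := h.degree_pos v
    have := hleaf v
    omega
  exact ((Finset.sum_eq_sum_iff_of_le hle).1 h.sum_degrees.symm v (Finset.mem_univ v)).symm

lemma image_neighborFinset_copy [Fintype W] {H : SimpleGraph W} (f : Copy H G) {i : W}
    (h : G.degree (f i) ≤ H.degree i) :
    (H.neighborFinset i).image f = G.neighborFinset (f i) := by
  refine Finset.eq_of_subset_of_card_le (Finset.image_subset_iff.2 fun j hj => ?_) ?_
  · exact (G.mem_neighborFinset _ _).2 (f.toHom.map_adj ((H.mem_neighborFinset i j).1 hj))
  · rwa [Finset.card_image_of_injective _ (show Function.Injective f from f.injective),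
      card_neighborFinset_eq_degree, card_neighborFinset_eq_degree]

lemma nonempty_iso_of_copy [Fintype W] [Nonempty W] {H : SimpleGraph W} {d : ℕ}
    (hG : G.Connected) (hGd : G.IsRegularOfDegree d) (hHd : H.IsRegularOfDegree d)
    (f : Copy H G) : Nonempty (H ≃g G) := by
  have hnbr : ∀ i v, G.Adj (f i) v ↔ ∃ j, H.Adj i j ∧ f j = v := fun i v => by
    rw [← mem_neighborFinset, ← image_neighborFinset_copy f (by rw [hGd, hHd])]
    simp only [Finset.mem_image, mem_neighborFinset]
  have hadj : ∀ {i j}, G.Adj (f i) (f j) ↔ H.Adj i j := fun {i j} => by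
    rw [hnbr]
    exact ⟨fun ⟨k, hk, hkj⟩ => f.injective hkj ▸ hk, fun h => ⟨j, h, rfl⟩⟩
  have hsurj : Function.Surjective f := by
    refine Set.range_eq_univ.1 (eq_univ_of_forall_adj_mem hG (Set.range_nonempty f) ?_)
    rintro _ ⟨i, rfl⟩ v hv
    obtain ⟨j, -, hj⟩ := (hnbr i v).1 hv
    exact ⟨j, hj⟩
  exact ⟨⟨Equiv.ofBijective f ⟨f.injective, hsurj⟩, hadj⟩⟩

lemma nonempty_cycleGraph_iso (hG : G.Connected) (hcyc : ¬ G.IsAcyclic)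
    (hreg : G.IsRegularOfDegree 2) : Nonempty (cycleGraph (Fintype.card V) ≃g G) := by
  simp only [isAcyclic_iff_free_cycleGraph, not_forall, not_not] at hcyc
  obtain ⟨m, hm, ⟨f⟩⟩ := hcyc
  obtain ⟨m, rfl⟩ := Nat.exists_eq_add_of_le' hm
  obtain ⟨e⟩ := nonempty_iso_of_copy hG hreg (H := cycleGraph (m + 3))
    (fun v => by convert cycleGraph_degree_three_le) f
  rw [← Fintype.card_congr e.toEquiv, Fintype.card_fin]
  exact ⟨e⟩

lemma Unicyclic.exists_degree_eq_one_or_iso (h : Unicyclic G) :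
    (∃ v, G.degree v = 1) ∨ Nonempty (cycleGraph (Fintype.card V) ≃g G) := by
  by_contra! hcon
  exact hcon.2.false
    (nonempty_cycleGraph_iso h.1 h.not_isAcyclic (h.isRegularOfDegree_two hcon.1)).some

end Unicyclic

/-! ### Moving an edge -/

section Move

variable {G : SimpleGraph V} {u v w b x y : V}

/-- The graph obtained from `G` by replacing the edge `ub` with `uw`. -/
def moveEdge (G : SimpleGraph V) (u b w : V) : SimpleGraph V :=
  G.deleteEdges {s(u, b)} ⊔ edge u w

lemma moveEdge_adj_of_ne (hx : x ≠ u) (hy : y ≠ u) :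
    (moveEdge G u b w).Adj x y ↔ G.Adj x y := by
  simp [moveEdge, edge_adj, hx, hy]

lemma moveEdge_adj_left (huw : u ≠ w) :
    (moveEdge G u b w).Adj u y ↔ (G.Adj u y ∧ y ≠ b) ∨ y = w := by
  simp only [moveEdge, sup_adj, deleteEdges_adj, edge_adj, Set.mem_singleton_iff, Sym2.eq_iff]
  grind [G.ne_of_adj]

lemma moveEdge_adj_right (huw : u ≠ w) :
    (moveEdge G u b w).Adj y u ↔ (G.Adj y u ∧ y ≠ b) ∨ y = w := by
  rw [adj_comm, moveEdge_adj_left huw, adj_comm]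

lemma edgeSet_moveEdge (huw : u ≠ w) :
    (moveEdge G u b w).edgeSet = insert s(u, w) (G.edgeSet \ {s(u, b)}) := by
  rw [moveEdge, edgeSet_sup, edgeSet_deleteEdges, edgeSet_edge_of_ne huw, Set.union_comm,
    Set.singleton_union]

lemma connected_moveEdge (hG : G.Connected) (huw : u ≠ w)
    (hwb : (G.deleteEdges {s(u, b)}).Reachable w b) : (moveEdge G u b w).Connected := by
  have hle : G.deleteEdges {s(u, b)} ≤ moveEdge G u b w := le_sup_left
  have hub : (moveEdge G u b w).Reachable u b :=
    ((moveEdge_adj_left huw).2 (Or.inr rfl)).reachable.trans (hwb.mono hle)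
  have := hG.nonempty
  refine ⟨fun x y => ?_⟩
  obtain ⟨p⟩ := hG.preconnected x y
  induction p with
  | nil => rfl
  | @cons x z _ hadj _ ih =>
    refine Reachable.trans ?_ ih
    by_cases he : s(x, z) = s(u, b)
    · obtain ⟨rfl, rfl⟩ | ⟨rfl, rfl⟩ := Sym2.eq_iff.1 he
      exacts [hub, hub.symm]
    · exact (hle (deleteEdges_adj.2 ⟨hadj, he⟩)).reachable

variable [Fintype V]

lemma unicyclic_moveEdge (hG : Unicyclic G) (huw : u ≠ w) (hub : G.Adj u b)
    (hnw : ¬ G.Adj u w) (hwb : (G.deleteEdges {s(u, b)}).Reachable w b) :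
    Unicyclic (moveEdge G u b w) := by
  refine ⟨connected_moveEdge hG.1 huw hwb, ?_⟩
  rw [edgeSet_moveEdge huw, Set.ncard_insert_of_notMem (by simp [hnw]) (Set.toFinite _),
    Set.ncard_sdiff_singleton_add_one (by simpa using hub) (Set.toFinite _), hG.2]

lemma degree_moveEdge_left (huw : u ≠ w) (hub : G.Adj u b) (hnw : ¬ G.Adj u w) :
    (moveEdge G u b w).degree u = G.degree u := by
  have h : (moveEdge G u b w).neighborFinset u = insert w ((G.neighborFinset u).erase b) := by
    ext y
    simp only [mem_neighborFinset, moveEdge_adj_left huw, Finset.mem_insert, Finset.mem_erase]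
    tauto
  rw [← card_neighborFinset_eq_degree, h, Finset.card_insert_of_notMem (by simp [hnw]),
    Finset.card_erase_add_one (by simpa using hub), card_neighborFinset_eq_degree]

lemma degree_moveEdge_old (huw : u ≠ w) (hub : G.Adj u b) (hbw : b ≠ w) :
    (moveEdge G u b w).degree b + 1 = G.degree b := by
  have h : (moveEdge G u b w).neighborFinset b = (G.neighborFinset b).erase u := by
    ext y
    simp only [mem_neighborFinset, Finset.mem_erase]
    obtain rfl | hy := eq_or_ne y u
    · simp [moveEdge_adj_right huw, hbw]
    · simp [moveEdge_adj_of_ne hub.ne' hy, hy]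
  rw [← card_neighborFinset_eq_degree, h, Finset.card_erase_add_one (by simpa using hub.symm),
    card_neighborFinset_eq_degree]

lemma degree_moveEdge_new (huw : u ≠ w) (hnw : ¬ G.Adj u w) :
    (moveEdge G u b w).degree w = G.degree w + 1 := by
  have h : (moveEdge G u b w).neighborFinset w = insert u (G.neighborFinset w) := by
    ext y
    simp only [mem_neighborFinset, Finset.mem_insert]
    obtain rfl | hy := eq_or_ne y u
    · simp [moveEdge_adj_right huw]
    · simp [moveEdge_adj_of_ne huw.symm hy, hy]
  rw [← card_neighborFinset_eq_degree, h,
    Finset.card_insert_of_notMem (by simpa [adj_comm] using hnw), card_neighborFinset_eq_degree]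

lemma degree_moveEdge_of_ne (huw : u ≠ w) (hxu : x ≠ u) (hxb : x ≠ b) (hxw : x ≠ w) :
    (moveEdge G u b w).degree x = G.degree x := by
  have h : (moveEdge G u b w).neighborFinset x = G.neighborFinset x := by
    ext y
    simp only [mem_neighborFinset]
    obtain rfl | hy := eq_or_ne y u
    · simp [moveEdge_adj_right huw, hxb, hxw]
    · exact moveEdge_adj_of_ne hxu hy
  rw [← card_neighborFinset_eq_degree, h, card_neighborFinset_eq_degree]

lemma leaves_moveEdge_ssubset (huw : u ≠ w) (hub : G.Adj u b) (hnw : ¬ G.Adj u w)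
    (hw : G.degree w = 1) (hb : 3 ≤ G.degree b) :
    ({x | (moveEdge G u b w).degree x = 1} : Finset V) ⊂
      ({x | G.degree x = 1} : Finset V) := by
  have hbw : b ≠ w := fun h => by rw [h] at hb; omega
  rw [Finset.ssubset_iff_of_subset]
  · exact ⟨w, by simpa, by simp [degree_moveEdge_new huw hnw, hw]⟩
  · intro x hx
    simp only [Finset.mem_filter_univ] at hx ⊢
    obtain rfl | hxu := eq_or_ne x u
    · rwa [degree_moveEdge_left huw hub hnw] at hx
    obtain rfl | hxw := eq_or_ne x w
    · exact hw
    obtain rfl | hxb := eq_or_ne x b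
    · have := degree_moveEdge_old huw hub hbw
      omega
    · rwa [degree_moveEdge_of_ne huw hxu hxb hxw] at hx

lemma indepSum_moveEdge (t : ℝ) :
    indepSum (moveEdge G u b w) Finset.univ t = indepSum G (Finset.univ.erase u) t +
      t * indepSum G {y ∈ Finset.univ.erase u | ¬ (moveEdge G u b w).Adj u y} t := by
  rw [indepSum_erase _ (Finset.mem_univ u)]
  have hcongr : ∀ A ⊆ Finset.univ.erase u,
      indepSum (moveEdge G u b w) A t = indepSum G A t := fun A hA =>
    indepSum_congr (fun x hx y hy => moveEdge_adj_of_ne (Finset.ne_of_mem_erase (hA hx))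
      (Finset.ne_of_mem_erase (hA hy))) t
  rw [hcongr _ subset_rfl, hcongr _ (Finset.filter_subset _ _)]

/- Expanding both polynomials at `u` leaves the comparison of `A ∪ (P - w)` and `A ∪ (P - b)`, where
`A` consists of the nonneighbours of `u` outside `P`. Only `b` has neighbours in `A`. -/
lemma pre_moveEdge_of_indepSum_eq {P : Finset V} (huP : u ∉ P) (hwP : w ∈ P) (hbP : b ∈ P)
    (hwb : w ≠ b) (hub : G.Adj u b) (hclosed : ∀ y ∈ P, y ≠ b → ∀ x, G.Adj y x → x ∈ P)
    (hsum : ∀ t, indepSum G (P.erase w) t = indepSum G (P.erase b) t) :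
    Pre (moveEdge G u b w) G := by
  have huw : u ≠ w := fun h => huP (h ▸ hwP)
  have huP' : ∀ y ∈ P, y ≠ b → ¬ G.Adj u y := fun y hy hyb hadj =>
    huP (hclosed y hy hyb u hadj.symm)
  refine pre_iff.2 fun t ht => ?_
  set A : Finset V := {y | y ≠ u ∧ ¬ G.Adj u y ∧ y ∉ P} with hA
  have hAP : Disjoint A P := Finset.disjoint_left.2 fun y hy => by simp_all
  have hnadj : ∀ a ∈ A, ∀ y ∈ P, y ≠ b → ¬ G.Adj a y := fun a ha y hy hyb hadj =>
    (Finset.mem_filter.1 ha).2.2.2 (hclosed y hy hyb a hadj.symm)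
  have hleft : {y ∈ Finset.univ.erase u | ¬ (moveEdge G u b w).Adj u y} = A ∪ P.erase w := by
    ext y
    simp only [Finset.mem_filter, Finset.mem_erase, Finset.mem_univ, moveEdge_adj_left huw,
      Finset.mem_union, hA]
    grind
  have hright : {y ∈ Finset.univ.erase u | ¬ G.Adj u y} = A ∪ P.erase b := by
    ext y
    simp only [Finset.mem_filter, Finset.mem_erase, Finset.mem_univ, Finset.mem_union, hA]
    grind
  have hPw : insert b ((P.erase w).erase b) = P.erase w :=
    Finset.insert_erase (by simp [hwb.symm, hbP])
  have hle := indepSum_union_insert_le ht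
    (hAP.mono_right ((Finset.erase_subset b _).trans (Finset.erase_subset w P)))
    (fun a ha y hy => by
      simp only [Finset.mem_erase] at hy
      exact hnadj a ha y hy.2.2 hy.1)
    (Finset.disjoint_right.1 hAP hbP) (Finset.notMem_erase b (P.erase w))
  rw [hPw, hsum, ← indepSum_union (hAP.mono_right (Finset.erase_subset b P))
    fun a ha y hy => hnadj a ha y (Finset.mem_of_mem_erase hy) (Finset.ne_of_mem_erase hy)] at hle
  rw [indepSum_moveEdge, hleft, indepSum_erase G (Finset.mem_univ u), hright]
  exact add_le_add le_rfl (mul_le_mul_of_nonpos_left hle ht.2)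

end Move

/-! ### Pendant paths -/

section PendantPath

variable {G : SimpleGraph V} {u v w b : V} {p : G.Walk w b}

lemma dist_getVert (hp : p.length = G.dist w b) {i : ℕ} (hi : i ≤ p.length) :
    G.dist w (p.getVert i) = i := by
  have htake := dist_le (p.take i)
  have hdrop := dist_le (p.drop i)
  have htri := (p.take i).reachable.dist_triangle_left b
  rw [Walk.take_length] at htake
  rw [Walk.drop_length] at hdrop
  omega

lemma getVert_adj_iff (hp : p.length = G.dist w b) {i j : ℕ} (hi : i ≤ p.length)
    (hj : j ≤ p.length) : G.Adj (p.getVert i) (p.getVert j) ↔ (hasse ℕ).Adj i j := by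
  rw [hasse_adj, Nat.covBy_iff_add_one_eq, Nat.covBy_iff_add_one_eq]
  constructor
  · intro h
    have hdist := h.diff_dist_adj (u := w)
    rw [dist_getVert hp hi, dist_getVert hp hj] at hdist
    have hne : i ≠ j := fun hij => h.ne (congrArg p.getVert hij)
    omega
  · rintro (rfl | rfl)
    · exact p.adj_getVert_succ hj
    · exact (p.adj_getVert_succ hi).symm

/-- A pendant path from `w` to `b`: a shortest walk, with `b` the only vertex on it that may have
neighbours outside. -/
structure IsPendantPath (p : G.Walk w b) : Prop where
  length_eq : p.length = G.dist w b
  mem_support : ∀ y ∈ p.support, y ≠ b → ∀ x, G.Adj y x → x ∈ p.support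

lemma getVert_injOn (hp : p.length = G.dist w b) :
    Set.InjOn p.getVert {i | i ≤ p.length} := fun i hi j hj hij => by
  rw [← dist_getVert hp hi, hij, dist_getVert hp hj]

lemma mem_support_toFinset_iff {y : V} :
    y ∈ p.support.toFinset ↔ ∃ i ≤ p.length, p.getVert i = y := by
  rw [List.mem_toFinset, Walk.mem_support_iff_exists_getVert]
  grind

lemma indepSum_image_getVert (hp : p.length = G.dist w b) {A : Finset ℕ}
    (hA : ∀ i ∈ A, i ≤ p.length) (x : ℝ) :
    indepSum G (A.image p.getVert) x = indepSum (hasse ℕ) A x :=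
  indepSum_image ((getVert_injOn hp).mono hA)
    (fun i hi j hj => (getVert_adj_iff hp (hA i hi) (hA j hj)).symm) x

lemma support_erase_start (hp : p.length = G.dist w b) :
    p.support.toFinset.erase w = ((Finset.range p.length).image Nat.succ).image p.getVert := by
  ext y
  simp only [Finset.mem_erase, mem_support_toFinset_iff, Finset.mem_image, Finset.mem_range]
  constructor
  · rintro ⟨hy, i, hi, rfl⟩
    have hi0 : i ≠ 0 := fun h => hy (by simp [h])
    exact ⟨i, ⟨i - 1, by omega, by omega⟩, rfl⟩
  · rintro ⟨_, ⟨i, hi, rfl⟩, rfl⟩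
    refine ⟨fun h => ?_, i.succ, hi, rfl⟩
    have := getVert_injOn hp (Set.mem_ofPred.2 hi) (Set.mem_ofPred.2 (Nat.zero_le p.length))
      (h.trans p.getVert_zero.symm)
    omega

lemma support_erase_end (hp : p.length = G.dist w b) :
    p.support.toFinset.erase b = (Finset.range p.length).image p.getVert := by
  ext y
  simp only [Finset.mem_erase, mem_support_toFinset_iff, Finset.mem_image, Finset.mem_range]
  constructor
  · rintro ⟨hy, i, hi, rfl⟩
    have hik : i ≠ p.length := fun h => hy (by simp [h])
    exact ⟨i, by omega, rfl⟩
  · rintro ⟨i, hi, rfl⟩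
    refine ⟨fun h => ?_, i, hi.le, rfl⟩
    have := getVert_injOn hp (Set.mem_ofPred.2 hi.le) (Set.mem_ofPred.2 le_rfl)
      (h.trans p.getVert_length.symm)
    omega

/- Deleting either end of a path with `k` edges leaves a path on `k` vertices. -/
lemma indepSum_support_erase (hp : p.length = G.dist w b) (x : ℝ) :
    indepSum G (p.support.toFinset.erase w) x = indepSum G (p.support.toFinset.erase b) x := by
  rw [support_erase_start hp, support_erase_end hp, indepSum_image_getVert hp (by simp),
    indepSum_image_getVert hp (fun i hi => (Finset.mem_range.1 hi).le),
    indepSum_image Nat.succ_injective.injOn]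
  simp [hasse_adj, Nat.covBy_iff_add_one_eq]

lemma IsPendantPath.not_adj_start (hp : IsPendantPath p) (hwb : w ≠ b) (hu : u ∉ p.support) :
    ¬ G.Adj u w := fun h => hu (hp.mem_support w p.start_mem_support hwb u h.symm)

section Fintype

variable [Fintype V]

lemma IsPendantPath.pre_moveEdge (hp : IsPendantPath p) (hwb : w ≠ b) (hu : u ∉ p.support)
    (hub : G.Adj u b) : Pre (moveEdge G u b w) G :=
  pre_moveEdge_of_indepSum_eq (P := p.support.toFinset) (by simpa) (by simp) (by simp) hwb hub
    (by simpa using hp.mem_support) (indepSum_support_erase hp.length_eq)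

lemma IsPendantPath.unicyclic_moveEdge (hp : IsPendantPath p) (hG : Unicyclic G) (hwb : w ≠ b)
    (hu : u ∉ p.support) (hub : G.Adj u b) : Unicyclic (moveEdge G u b w) :=
  _root_.unicyclic_moveEdge hG (fun h => hu (h ▸ p.start_mem_support)) hub
    (hp.not_adj_start hwb hu)
    (reachable_deleteEdges_iff_exists_walk.2 ⟨p, fun h => hu (p.fst_mem_support_of_mem_edges h)⟩)

lemma IsPendantPath.exists_adj_notMem_support (hp : IsPendantPath p) (hb : 3 ≤ G.degree b) :
    ∃ u ∉ p.support, G.Adj u b := by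
  by_contra! h
  have hsub : G.neighborFinset b ⊆ {p.getVert (p.length - 1)} := fun u hu => by
    rw [mem_neighborFinset] at hu
    have hmem : u ∈ p.support.toFinset := by
      by_contra hu'
      exact h u (by simpa using hu') hu.symm
    obtain ⟨i, hi, rfl⟩ := mem_support_toFinset_iff.1 hmem
    have hadj : G.Adj (p.getVert p.length) (p.getVert i) := by rwa [p.getVert_length]
    rw [getVert_adj_iff hp.length_eq le_rfl hi, hasse_adj, Nat.covBy_iff_add_one_eq,
      Nat.covBy_iff_add_one_eq] at hadj
    rw [Finset.mem_singleton, show i = p.length - 1 by omega]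
  have := Finset.card_le_card hsub
  rw [card_neighborFinset_eq_degree, Finset.card_singleton] at this
  omega

/- Take `b` closest to `w` among the vertices of degree at least three: before `b`, every vertex of
a shortest path has its predecessor and its successor as its only neighbours. -/
lemma exists_isPendantPath (hG : G.Connected) (hw : G.degree w = 1)
    (hb : ∃ b, 3 ≤ G.degree b) :
    ∃ (b : V) (p : G.Walk w b), IsPendantPath p ∧ 3 ≤ G.degree b := by
  obtain ⟨b, hb, hmin⟩ := Finset.exists_min_image ({b | 3 ≤ G.degree b} : Finset V) (G.dist w)
    (by simpa [Finset.Nonempty] using hb)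
  simp only [Finset.mem_filter_univ] at hb hmin
  obtain ⟨p, hp⟩ := hG.exists_walk_length_eq_dist w b
  refine ⟨b, p, ⟨hp, fun y hy hyb x hyx => ?_⟩, hb⟩
  obtain ⟨i, rfl, hi⟩ := Walk.mem_support_iff_exists_getVert.1 hy
  have hik : i < p.length := hi.lt_of_ne fun h => hyb (by simp [h])
  have hdeg : G.degree (p.getVert i) ≤ 2 := by
    by_contra! h
    have := hmin _ h
    rw [dist_getVert hp hi] at this
    omega
  have hsucc := p.adj_getVert_succ hik
  by_contra hx
  have hxs : x ≠ p.getVert (i + 1) := fun h => hx (h ▸ p.getVert_mem_support _)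
  rcases i with _ | i
  · rw [p.getVert_zero] at hsucc hyx
    have : ({x, p.getVert 1} : Finset V) ⊆ G.neighborFinset w := by
      simp [Finset.insert_subset_iff, hsucc, hyx]
    have := Finset.card_le_card this
    rw [Finset.card_pair hxs, card_neighborFinset_eq_degree] at this
    omega
  · have hpred := (p.adj_getVert_succ (Nat.lt_of_succ_lt hik)).symm
    have hxp : x ≠ p.getVert i := fun h => hx (h ▸ p.getVert_mem_support _)
    have hps : p.getVert i ≠ p.getVert (i + 2) := fun h => by
      have := getVert_injOn hp (Set.mem_ofPred.2 (by omega)) (Set.mem_ofPred.2 (by omega)) h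
      omega
    have : ({x, p.getVert i, p.getVert (i + 2)} : Finset V) ⊆
        G.neighborFinset (p.getVert (i + 1)) := by
      simp [Finset.insert_subset_iff, hsucc, hyx, hpred]
    have := Finset.card_le_card this
    rw [Finset.card_eq_three.2 ⟨_, _, _, hxp, hxs, hps, rfl⟩,
      card_neighborFinset_eq_degree] at this
    omega

theorem Unicyclic.pre_cycleGraph (hG : Unicyclic G) : Pre (cycleGraph (Fintype.card V)) G := by
  induction hleaves : ({x | G.degree x = 1} : Finset V) using Finset.strongInduction
    generalizing G with
  | H S ih =>
    obtain ⟨w, hw⟩ | ⟨⟨e⟩⟩ := hG.exists_degree_eq_one_or_iso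
    · obtain ⟨b, p, hp, hb⟩ := exists_isPendantPath hG.1 hw (hG.exists_three_le_degree hw)
      have hwb : w ≠ b := fun h => by rw [← h, hw] at hb; omega
      obtain ⟨u, hu, hub⟩ := hp.exists_adj_notMem_support hb
      have huw : u ≠ w := fun h => hu (h ▸ p.start_mem_support)
      have hlt := leaves_moveEdge_ssubset huw hub (hp.not_adj_start hwb hu) hw hb
      have := hG.nonempty
      exact (ih _ (hleaves ▸ hlt) (hp.unicyclic_moveEdge hG hwb hu hub) rfl).trans
        (hp.pre_moveEdge hwb hu hub)
    · exact pre_of_embedding e.toEmbedding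

end Fintype

end PendantPath

/-! ### Comparison with `U_n` -/

section Ugraph

lemma indepSum_of_isIndepFinset {G : SimpleGraph V} {A : Finset V} (hA : IsIndepFinset G A)
    (x : ℝ) : indepSum G A x = (1 + x) ^ A.card := by
  induction A using Finset.induction_on with
  | empty => simp [indepSum_empty]
  | insert v A hv ih =>
    obtain ⟨hA, hvA⟩ := isIndepFinset_insert.1 hA
    rw [indepSum_insert_isolated G hv hvA, ih hA, Finset.card_insert_of_notMem hv, pow_succ']

lemma indepSum_pair [DecidableEq V] {G : SimpleGraph V} {a b : V} (hab : G.Adj a b) (x : ℝ) :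
    indepSum G {a, b} x = 1 + 2 * x := by
  rw [indepSum_insert G (by simpa using hab.ne), indepSum_singleton,
    Finset.filter_eq_empty_iff.2 (by simpa), indepSum_empty]
  ring

variable {m : ℕ} {i j : Fin (m + 3)}

lemma fin_zero_ne_two (m : ℕ) : (0 : Fin (m + 3)) ≠ 2 := by
  simp only [ne_eq, Fin.ext_iff, Fin.val_zero, Fin.val_two]
  omega

lemma fin_one_ne_two (m : ℕ) : (1 : Fin (m + 3)) ≠ 2 := by
  simp only [ne_eq, Fin.ext_iff, Fin.val_one, Fin.val_two]
  omega

lemma Ugraph_adj_zero_iff : (Ugraph (m + 3)).Adj 0 i ↔ i ≠ 0 := by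
  simp [Ugraph, eq_comm]

lemma Ugraph_adj_iff_of_ne_zero (hi : i ≠ 0) (hj : j ≠ 0) :
    (Ugraph (m + 3)).Adj i j ↔ s(i, j) = s(1, 2) := by
  rw [ne_eq, Fin.ext_iff, Fin.val_zero] at hi hj
  simp only [Ugraph, fromRel_adj, Sym2.eq_iff, Fin.ext_iff, Fin.val_one, Fin.val_two, ne_eq]
  omega

lemma unicyclic_Ugraph (m : ℕ) : Unicyclic (Ugraph (m + 3)) := by
  have hreach : ∀ i, (Ugraph (m + 3)).Reachable 0 i := fun i => by
    obtain rfl | hi := eq_or_ne i 0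
    · rfl
    · exact (Ugraph_adj_zero_iff.2 hi).reachable
  refine ⟨⟨fun i j => (hreach i).symm.trans (hreach j)⟩, ?_⟩
  have hedge : (Ugraph (m + 3)).edgeFinset =
      insert s(1, 2) ((Ugraph (m + 3)).incidenceFinset 0) := by
    ext e
    induction e with | h i j
    rw [mem_edgeFinset, mem_edgeSet, Finset.mem_insert, mem_incidenceFinset,
      mk'_mem_incidenceSet_iff]
    obtain rfl | hi := eq_or_ne i 0
    · simp [fin_zero_ne_two]
    obtain rfl | hj := eq_or_ne j 0
    · simp [fin_zero_ne_two]
    simp [Ugraph_adj_iff_of_ne_zero hi hj, hi.symm, hj.symm]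
  have hnbr : (Ugraph (m + 3)).neighborFinset 0 = Finset.univ.erase 0 := by
    ext i
    simp [Ugraph_adj_zero_iff]
  rw [Set.ncard_eq_toFinset_card', ← edgeFinset, hedge,
    Finset.card_insert_of_notMem (by simp [mk'_mem_incidenceSet_iff, fin_zero_ne_two]),
    card_incidenceFinset_eq_degree, ← card_neighborFinset_eq_degree, hnbr]
  simp

lemma indepSum_Ugraph (m : ℕ) (x : ℝ) :
    indepSum (Ugraph (m + 3)) Finset.univ x = (1 + 2 * x) * (1 + x) ^ m + x := by
  have h12 : (Ugraph (m + 3)).Adj 1 2 := by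
    rw [Ugraph_adj_iff_of_ne_zero] <;> simp [(fin_zero_ne_two m).symm]
  set A : Finset (Fin (m + 3)) := {0, 1, 2}ᶜ with hA
  have hmem : ∀ i ∈ A, i ≠ 0 ∧ i ≠ 1 ∧ i ≠ 2 := fun i hi => by simpa [hA] using hi
  have hnadj : ∀ i ∈ A, ∀ j, j ≠ 0 → ¬ (Ugraph (m + 3)).Adj j i := fun i hi j hj hadj => by
    obtain ⟨hi0, hi1, hi2⟩ := hmem i hi
    rw [Ugraph_adj_iff_of_ne_zero hj hi0, Sym2.eq_iff] at hadj
    tauto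
  have herase : Finset.univ.erase 0 = {1, 2} ∪ A := by
    ext i
    have : (1 : Fin (m + 3)) ≠ 0 ∧ (2 : Fin (m + 3)) ≠ 0 :=
      ⟨by simp, (fin_zero_ne_two m).symm⟩
    simp only [Finset.mem_erase, Finset.mem_univ, hA, Finset.mem_union, Finset.mem_insert,
      Finset.mem_singleton, Finset.mem_compl]
    grind
  have hcard : A.card = m := by
    rw [hA, Finset.card_compl, Fintype.card_fin, Finset.card_eq_three.2
      ⟨0, 1, 2, by simp, fin_zero_ne_two m, fin_one_ne_two m, rfl⟩,
      Nat.add_sub_cancel]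
  rw [indepSum_erase _ (Finset.mem_univ 0), Finset.filter_eq_empty_iff.2
    fun _ hi => not_not.2 (Ugraph_adj_zero_iff.2 (Finset.ne_of_mem_erase hi)), indepSum_empty,
    herase, indepSum_union, indepSum_pair h12, indepSum_of_isIndepFinset, hcard, mul_one]
  · exact fun i hi j hj => hnadj j hj i (hmem i hi).1
  · exact Finset.disjoint_right.2 fun i hi => by simp [hmem i hi]
  · exact fun i hi j hj => hnadj j hj i (by rintro rfl; simp [fin_zero_ne_two] at hi)

lemma xi_Ugraph_le_succ (m : ℕ) : xi (Ugraph (m + 3)) ≤ xi (Ugraph (m + 4)) := by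
  refine Pre.xi_le (pre_of_embedding ⟨Fin.castSuccEmb, ?_⟩)
  simp only [Ugraph, fromRel_adj, Fin.coe_castSuccEmb, Fin.val_castSucc, ne_eq, Fin.ext_iff,
    implies_true]

end Ugraph

section Unicyclic

variable [Fintype V] {G : SimpleGraph V} {v : V}

lemma Unicyclic.exists_adj_ne (hG : Unicyclic G) (w : V) :
    ∃ a b, G.Adj a b ∧ a ≠ w ∧ b ≠ w := by
  by_contra! h
  have hsub : G.edgeFinset ⊆ G.incidenceFinset w := fun e he => by
    induction e with | h a b
    rw [mem_edgeFinset, mem_edgeSet] at he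
    rw [mem_incidenceFinset, mk'_mem_incidenceSet_iff]
    exact ⟨he, or_iff_not_imp_left.2 fun haw => (h a b he (Ne.symm haw)).symm⟩
  have hcard := Finset.card_le_card hsub
  rw [hG.card_edgeFinset, card_incidenceFinset_eq_degree] at hcard
  exact (G.degree_lt_card_verts w).not_ge hcard

lemma Unicyclic.indepSum_erase_le [DecidableEq V] (hG : Unicyclic G) {x : ℝ}
    (hx : x ∈ Set.Icc (xi G) 0) (w : V) :
    indepSum G (Finset.univ.erase w) x ≤ (1 + x) ^ (Fintype.card V - 3) * (1 + 2 * x) := by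
  obtain ⟨a, b, hab, haw, hbw⟩ := hG.exists_adj_ne w
  have hpair : ({a, b} : Finset V) ∪ {w, a, b}ᶜ = Finset.univ.erase w := by
    ext y
    simp only [Finset.mem_union, Finset.mem_compl, Finset.mem_insert, Finset.mem_singleton,
      Finset.mem_erase, Finset.mem_univ]
    grind
  have hcard : ({w, a, b}ᶜ : Finset V).card = Fintype.card V - 3 := by
    rw [Finset.card_compl, Finset.card_eq_three.2 ⟨w, a, b, haw.symm, hbw.symm, hab.ne, rfl⟩]
  have := hG.nonempty
  rw [← hpair, ← hcard, ← indepSum_pair hab]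
  exact indepSum_union_le_pow hx (disjoint_compl_right.mono_left (by simp))

lemma Unicyclic.induce_compl_singleton (hG : Unicyclic G) (hv : G.degree v = 1) :
    Unicyclic (G.induce {v}ᶜ) := by
  refine ⟨hG.1.induce_compl_singleton_of_degree_eq_one hv, ?_⟩
  rw [Set.ncard_eq_toFinset_card', ← edgeFinset, card_edgeFinset_induce_compl_singleton,
    card_edgeFinset_deleteIncidenceSet, hv, hG.card_edgeFinset, Fintype.card_compl_set]
  simp

lemma exists_indepSum_eq_of_degree_eq_one (hv : G.degree v = 1) :
    ∃ w : ({v}ᶜ : Set V), ∀ x, indepSum G Finset.univ x =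
      indepSum (G.induce {v}ᶜ) Finset.univ x +
        x * indepSum (G.induce {v}ᶜ) (Finset.univ.erase w) x := by
  obtain ⟨w, hvw, hw⟩ := degree_eq_one_iff_existsUnique_adj.1 hv
  refine ⟨⟨w, hvw.ne'⟩, fun x => ?_⟩
  rw [indepSum_erase G (Finset.mem_univ v), ← indepSum_image_embedding (Embedding.induce _),
    ← indepSum_image_embedding (Embedding.induce _)]
  congr 3
  · ext y
    simp
  · ext y
    simp only [Finset.mem_filter, Finset.mem_erase, Finset.mem_univ, Finset.mem_image, ne_eq,
      and_true, Embedding.induce, Subtype.exists, Subtype.ext_iff]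
    have : G.Adj v y ↔ y = w := ⟨hw y, fun h => h ▸ hvw⟩
    aesop

lemma card_compl_singleton_add_one (v : V) :
    Fintype.card ({v}ᶜ : Set V) + 1 = Fintype.card V := by
  have := Fintype.card_pos_iff.2 ⟨v⟩
  rw [Fintype.card_compl_set, Set.card_singleton]
  omega

/- As `G - v - w` still has an edge, where `w` is the neighbour of the leaf `v`, passing from
`G - v` to `G` decreases the polynomial at most as much as passing from `U_{n-1}` to `U_n` does. -/
lemma Unicyclic.pre_Ugraph_succ (hG : Unicyclic G) (hv : G.degree v = 1) {m : ℕ}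
    (hm : Fintype.card V = m + 4) (hK : Pre (G.induce {v}ᶜ) (Ugraph (m + 3))) :
    Pre G (Ugraph (m + 4)) := by
  have hKuni := hG.induce_compl_singleton hv
  have hcard := card_compl_singleton_add_one v
  obtain ⟨w, hw⟩ := exists_indepSum_eq_of_degree_eq_one hv
  have := hKuni.nonempty
  refine pre_iff.2 fun x hx => ?_
  have hxU : x ∈ Set.Icc (xi (Ugraph (m + 3))) 0 := ⟨(xi_Ugraph_le_succ m).trans hx.1, hx.2⟩
  have hle := hKuni.indepSum_erase_le ⟨hK.xi_le.trans hxU.1, hx.2⟩ w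
  rw [show Fintype.card ({v}ᶜ : Set V) - 3 = m by omega] at hle
  calc indepSum (Ugraph (m + 4)) Finset.univ x
      = indepSum (Ugraph (m + 3)) Finset.univ x + x * ((1 + x) ^ m * (1 + 2 * x)) := by
        rw [indepSum_Ugraph (m + 1), indepSum_Ugraph]
        ring
    _ ≤ indepSum (G.induce {v}ᶜ) Finset.univ x +
          x * indepSum (G.induce {v}ᶜ) (Finset.univ.erase w) x :=
        add_le_add (pre_iff.1 hK x hxU) (mul_le_mul_of_nonpos_left hle hx.2)
    _ = indepSum G Finset.univ x := (hw x).symm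

lemma Unicyclic.pre_Ugraph_add_three {m : ℕ} (hG : Unicyclic G) (hm : Fintype.card V = m + 3) :
    Pre G (Ugraph (m + 3)) := by
  induction m using Nat.strong_induction_on generalizing V with
  | h m ih =>
    obtain ⟨v, hv⟩ | ⟨⟨e⟩⟩ := hG.exists_degree_eq_one_or_iso
    · have hK := hG.induce_compl_singleton hv
      have hcard := card_compl_singleton_add_one v
      obtain ⟨k, hk⟩ := Nat.exists_eq_add_of_le' hK.three_le_card
      obtain rfl : m = k + 1 := by omega
      exact hG.pre_Ugraph_succ hv hm (ih k k.lt_succ_self hK hk)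
    · have hcycle := (unicyclic_Ugraph m).pre_cycleGraph
      rw [hm] at e
      rw [Fintype.card_fin] at hcycle
      exact (pre_of_embedding e.symm.toEmbedding).trans hcycle

theorem Unicyclic.pre_Ugraph (hG : Unicyclic G) : Pre G (Ugraph (Fintype.card V)) := by
  obtain ⟨m, hm⟩ := Nat.exists_eq_add_of_le' hG.three_le_card
  exact hm ▸ hG.pre_Ugraph_add_three hm

end Unicyclic

/-! ### The corona -/

section Corona

variable {H : SimpleGraph V} {u v : V}

lemma corona_adj_inl_inl : (corona H).Adj (Sum.inl u) (Sum.inl v) ↔ H.Adj u v := by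
  simp only [corona, fromRel_adj, ne_eq, Sum.inl.injEq, adj_comm, or_self]
  exact and_iff_right_of_imp SimpleGraph.Adj.ne

lemma corona_adj_inl_inr : (corona H).Adj (Sum.inl u) (Sum.inr v) ↔ u = v := by
  simp [corona]

lemma corona_adj_inr_inl : (corona H).Adj (Sum.inr u) (Sum.inl v) ↔ v = u := by
  simp [corona]

lemma not_corona_adj_inr_inr : ¬ (corona H).Adj (Sum.inr u) (Sum.inr v) := by
  simp [corona]

lemma isIndepFinset_corona_disjSum {S T : Finset V} :
    IsIndepFinset (corona H) (S.disjSum T) ↔ IsIndepFinset H S ∧ Disjoint T S := by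
  simp only [IsIndepFinset, Sum.forall, Finset.inl_mem_disjSum, Finset.inr_mem_disjSum,
    corona_adj_inl_inl, corona_adj_inl_inr, corona_adj_inr_inl, not_corona_adj_inr_inr,
    Finset.disjoint_left]
  grind

lemma connected_of_corona (h : (corona H).Connected) : H.Connected := by
  have hstep : ∀ {a b}, (corona H).Adj a b → H.Reachable (a.elim id id) (b.elim id id) := by
    rintro (a | a) (b | b) hab
    · exact (corona_adj_inl_inl.1 hab).reachable
    · rw [corona_adj_inl_inr.1 hab]; rfl
    · rw [corona_adj_inr_inl.1 hab]; rfl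
    · exact absurd hab not_corona_adj_inr_inr
  have hreach : ∀ {a b}, (corona H).Reachable a b → H.Reachable (a.elim id id) (b.elim id id) := by
    rintro a b ⟨p⟩
    induction p with
    | nil => rfl
    | cons hab _ ih => exact (hstep hab).trans ih
  have : Nonempty V := h.nonempty.map (Sum.elim id id)
  exact ⟨fun u v => hreach (h.preconnected (Sum.inl u) (Sum.inl v))⟩

variable [Fintype V]

lemma degree_corona_inl : (corona H).degree (Sum.inl v) = H.degree v + 1 := by
  have h : (corona H).neighborFinset (Sum.inl v) = (H.neighborFinset v).disjSum {v} := by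
    ext (u | u)
    · simp [corona_adj_inl_inl]
    · simp [corona_adj_inl_inr, eq_comm]
  rw [← card_neighborFinset_eq_degree, h, Finset.card_disjSum, card_neighborFinset_eq_degree,
    Finset.card_singleton]

lemma degree_corona_inr : (corona H).degree (Sum.inr v) = 1 :=
  degree_eq_one_iff_existsUnique_adj.2 ⟨Sum.inl v, corona_adj_inr_inl.2 rfl, by
    rintro (u | u) h
    · rw [corona_adj_inr_inl.1 h]
    · exact absurd h not_corona_adj_inr_inr⟩

lemma card_edgeFinset_corona :
    (corona H).edgeFinset.card = H.edgeFinset.card + Fintype.card V := by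
  have h := (corona H).sum_degrees_eq_twice_card_edges
  simp only [Fintype.sum_sum_type, degree_corona_inl, degree_corona_inr, Finset.sum_add_distrib,
    H.sum_degrees_eq_twice_card_edges, Finset.sum_const, Finset.card_univ, smul_eq_mul] at h
  omega

lemma Unicyclic.of_corona (h : Unicyclic (corona H)) : Unicyclic H := by
  refine ⟨connected_of_corona h.1, ?_⟩
  have hcard := h.card_edgeFinset
  rw [card_edgeFinset_corona, Fintype.card_sum] at hcard
  rw [Set.ncard_eq_toFinset_card', ← edgeFinset]
  omega

lemma indepSum_corona (H : SimpleGraph V) (x : ℝ) :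
    indepSum (corona H) Finset.univ x =
      ∑ S with IsIndepFinset H S, x ^ S.card * (1 + x) ^ (Fintype.card V - S.card) := by
  have hpow : ∀ S : Finset V, (1 + x) ^ (Fintype.card V - S.card) =
      ∑ T with Disjoint T S, x ^ T.card := fun S => by
    rw [← Finset.card_compl, add_comm, ← Finset.sum_pow_mul_eq_add_pow]
    refine Finset.sum_congr ?_ (by simp)
    ext T
    simp [Finset.subset_compl_iff_disjoint_right]
  rw [indepSum, Finset.powerset_univ, Finset.sum_filter,
    ← Finset.sumEquiv.symm.toEquiv.sum_comp, Fintype.sum_prod_type, Finset.sum_filter]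
  refine Finset.sum_congr rfl fun S _ => ?_
  by_cases hS : IsIndepFinset H S <;>
    simp [isIndepFinset_corona_disjSum, hS, hpow, Finset.mul_sum, Finset.sum_filter, pow_add]

lemma indepSum_corona_eq_mul (H : SimpleGraph V) {x : ℝ} (hx : 1 + x ≠ 0) :
    indepSum (corona H) Finset.univ x =
      (1 + x) ^ Fintype.card V * indepSum H Finset.univ (x / (1 + x)) := by
  rw [indepSum_corona, indepSum, Finset.mul_sum, Finset.powerset_univ]
  refine Finset.sum_congr rfl fun S _ => ?_
  rw [div_pow, mul_div_left_comm, pow_sub₀ _ hx S.card_le_univ, div_eq_mul_inv]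

lemma xi_corona [Nonempty V] (H : SimpleGraph V) : xi (corona H) = xi H / (1 - xi H) := by
  have hxi := xi_neg H
  have hpos : 0 < 1 - xi H := by linarith
  have hadd : 1 + xi H / (1 - xi H) = 1 / (1 - xi H) := by
    field_simp
    ring
  refine (isGreatest_xi (corona H)).unique ⟨?_, fun x hx => ?_⟩
  · rw [Set.mem_ofPred, eval_indepPoly, indepSum_corona_eq_mul H (hadd ▸ by positivity), hadd,
      div_div_div_cancel_right₀ hpos.ne', div_one, indepSum_xi, mul_zero]
  · by_contra! hlt
    have hx1 : 0 < 1 + x := by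
      have : 0 < 1 / (1 - xi H) := by positivity
      linarith
    have hroot : x / (1 + x) ≤ xi H := (isGreatest_xi H).2 <| by
      rw [Set.mem_ofPred, eval_indepPoly, indepSum_corona_eq_mul H hx1.ne'] at hx
      rw [Set.mem_ofPred, eval_indepPoly]
      exact (mul_eq_zero_iff_left (by positivity)).1 hx
    rw [div_le_iff₀ hx1] at hroot
    rw [div_lt_iff₀ hpos] at hlt
    linarith

lemma xi_corona_mono [Fintype W] [Nonempty V] [Nonempty W] {K : SimpleGraph W} (h : xi K ≤ xi H) :
    xi (corona K) ≤ xi (corona H) := by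
  rw [xi_corona, xi_corona, div_le_div_iff₀ (by linarith [xi_neg K]) (by linarith [xi_neg H])]
  linarith

end Corona

/-! ### Very well covered graphs -/

section WellCovered

variable {G : SimpleGraph V}

section Finite

variable [Finite V]

lemma IsIndepFinset.exists_maximal {S : Finset V} (hS : IsIndepFinset G S) :
    ∃ T, S ⊆ T ∧ IsIndepFinset G T ∧ ∀ v ∉ T, ¬ IsIndepFinset G (insert v T) := by
  obtain ⟨T, hST, hT⟩ := (Set.toFinite {T | IsIndepFinset G T}).exists_le_maximal hS
  exact ⟨T, hST, hT.1, fun v hv h =>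
    hv (hT.2 h (Finset.subset_insert v T) (Finset.mem_insert_self v T))⟩

lemma WellCovered.exists_superset (hG : WellCovered G) {S : Finset V} (hS : IsIndepFinset G S) :
    ∃ T, S ⊆ T ∧ IsIndepFinset G T ∧ ∀ X, IsIndepFinset G X → X.card ≤ T.card := by
  obtain ⟨T, hST, hT, hTmax⟩ := hS.exists_maximal
  refine ⟨T, hST, hT, fun X hX => ?_⟩
  obtain ⟨Y, hXY, hY, hYmax⟩ := hX.exists_maximal
  exact (Finset.card_le_card hXY).trans (hG Y T hY hYmax hT hTmax).le

end Finite

variable [Fintype V]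

lemma Unicyclic.exists_isTree_le (hG : Unicyclic G) :
    ∃ T ≤ G, T.IsTree ∧ ∃ u, ∀ ⦃x y⦄, G.Adj x y → ¬ T.Adj x y → x = u ∨ y = u := by
  obtain ⟨T, hTG, hT⟩ := hG.1.exists_isTree_le
  have hcard : (G.edgeFinset \ T.edgeFinset).card = 1 := by
    have := Finset.card_sdiff_add_card_eq_card (edgeFinset_mono hTG)
    have := hG.card_edgeFinset
    have := hT.card_edgeFinset
    omega
  obtain ⟨⟨u, v⟩, he⟩ := Finset.card_eq_one.1 hcard
  refine ⟨T, hTG, hT, u, fun x y hxy hT => ?_⟩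
  have hmem : s(x, y) ∈ G.edgeFinset \ T.edgeFinset := by simp [hxy, hT]
  obtain ⟨rfl, -⟩ | ⟨-, rfl⟩ := Sym2.eq_iff.1 (Finset.mem_singleton.1 (he ▸ hmem))
  exacts [Or.inl rfl, Or.inr rfl]

/- Of the two colour classes of a spanning tree, the one avoiding the end `u` of the missing edge is
independent, and the other one becomes so when `u` is removed. -/
lemma Unicyclic.exists_isIndepFinset_card_le (hG : Unicyclic G) :
    ∃ S, IsIndepFinset G S ∧ Fintype.card V ≤ 2 * S.card + 1 := by
  obtain ⟨T, -, hT, u, hu⟩ := hG.exists_isTree_le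
  obtain ⟨c⟩ := hT.colorable_two
  have hadd := Finset.card_filter_add_card_filter_not (s := Finset.univ) fun x => c x = c u
  rw [Finset.card_univ] at hadd
  have hindep : ∀ S : Finset V, u ∉ S → (∀ x ∈ S, ∀ y ∈ S, c x = c y) → IsIndepFinset G S :=
    fun S huS hS x hx y hy hxy => by
      by_cases hTxy : T.Adj x y
      · exact c.valid hTxy (hS x hx y hy)
      · obtain rfl | rfl := hu hxy hTxy
        exacts [huS hx, huS hy]
  obtain h | h := Nat.lt_or_ge (Fintype.card V) (2 * ({x | c x = c u} : Finset V).card)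
  · refine ⟨Finset.erase {x | c x = c u} u, hindep _ (by simp) fun x hx y hy => ?_, ?_⟩
    · simp only [Finset.mem_erase, Finset.mem_filter_univ] at hx hy
      rw [hx.2, hy.2]
    · rw [Finset.card_erase_of_mem (by simp)]
      omega
  · refine ⟨({x | ¬ c x = c u} : Finset V), hindep _ (by simp) fun x hx y hy => ?_, by omega⟩
    simp only [Finset.mem_filter_univ] at hx hy
    omega

lemma IsIndepFinset.card_sdiff_le {X T : Finset V} (hX : IsIndepFinset G X)
    (hT : IsIndepFinset G T) (hmax : ∀ Y, IsIndepFinset G Y → Y.card ≤ T.card) :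
    (X \ T).card ≤ (T ∩ X.biUnion fun v => G.neighborFinset v).card := by
  set N := X.biUnion fun v => G.neighborFinset v
  have hXN : ∀ x ∈ X, ∀ y ∉ N, ¬ G.Adj x y := fun x hx y hy hxy =>
    hy (Finset.mem_biUnion.2 ⟨x, hx, (mem_neighborFinset _ _ _).2 hxy⟩)
  have hexch : IsIndepFinset G (X \ T ∪ T \ N) := by
    intro x hx y hy hxy
    simp only [Finset.mem_union, Finset.mem_sdiff] at hx hy
    obtain hx | hx := hx <;> obtain hy | hy := hy
    exacts [hX x hx.1 y hy.1 hxy, hXN x hx.1 y hy.2 hxy, hXN y hy.1 x hx.2 hxy.symm,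
      hT x hx.1 y hy.1 hxy]
  have hle := hmax _ hexch
  rw [Finset.card_union_of_disjoint (Finset.sdiff_disjoint.mono_right Finset.sdiff_subset)] at hle
  have := Finset.card_inter_add_card_sdiff T N
  omega

/- Take a maximal independent set `T` containing a neighbour of some vertex of `X`. The vertices of
`X` outside `T` are exchanged into `T`, and induction applies to `X ∩ T`, whose neighbours avoid
`T`. -/
lemma WellCovered.card_le_card_biUnion_neighborFinset (hG : WellCovered G)
    (hnbr : ∀ v, ∃ w, G.Adj v w) (X : Finset V) (hX : IsIndepFinset G X) :
    X.card ≤ (X.biUnion fun v => G.neighborFinset v).card := by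
  induction X using Finset.strongInduction with
  | H X ih =>
  obtain rfl | ⟨x, hx⟩ := X.eq_empty_or_nonempty
  · simp
  obtain ⟨w, hxw⟩ := hnbr x
  obtain ⟨T, hwT, hT, hmax⟩ := hG.exists_superset (S := {w}) (by simp [IsIndepFinset])
  have hxT : x ∉ T := fun h => hT x h w (hwT (Finset.mem_singleton_self w)) hxw
  have hind := ih (X ∩ T) ((Finset.ssubset_iff_of_subset Finset.inter_subset_left).2
    ⟨x, hx, by simp [hxT]⟩) (hX.mono Finset.inter_subset_left)
  have hexch := hX.card_sdiff_le hT hmax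
  have hsub : ((X ∩ T).biUnion fun v => G.neighborFinset v) ⊆
      (X.biUnion fun v => G.neighborFinset v) \ T := fun y hy => by
    obtain ⟨z, hz, hzy⟩ := Finset.mem_biUnion.1 hy
    have hz := Finset.mem_inter.1 hz
    exact Finset.mem_sdiff.2 ⟨Finset.mem_biUnion.2 ⟨z, hz.1, hzy⟩,
      fun hyT => hT z hz.2 y hyT ((mem_neighborFinset _ _ _).1 hzy)⟩
  have hle := Finset.card_le_card hsub
  have := Finset.card_inter_add_card_sdiff X T
  have := Finset.card_inter_add_card_sdiff (X.biUnion fun v => G.neighborFinset v) T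
  rw [Finset.inter_comm] at hexch
  omega

lemma IsIndepFinset.exists_involutive_adj {S : Finset V} (hS : IsIndepFinset G S)
    (hcard : Fintype.card V ≤ 2 * S.card)
    (hhall : ∀ X ⊆ S, X.card ≤ (X.biUnion fun v => G.neighborFinset v).card) :
    ∃ σ : V → V, σ.Involutive ∧ ∀ v, G.Adj v (σ v) := by
  have hall : ∀ X : Finset S, X.card ≤ (X.biUnion fun v => G.neighborFinset (v : V)).card :=
    fun X => by
      have h := hhall (X.map (Function.Embedding.subtype _)) fun x hx => by
        obtain ⟨y, -, rfl⟩ := Finset.mem_map.1 hx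
        exact y.2
      rwa [Finset.card_map, Finset.map_eq_image, Finset.image_biUnion] at h
  obtain ⟨f, hinj, hf⟩ := (Finset.all_card_le_biUnion_card_iff_exists_injective _).1 hall
  simp only [mem_neighborFinset] at hf
  let g : S → {v // v ∉ S} := fun x => ⟨f x, fun h => hS x x.2 _ h (hf x)⟩
  have hg : Function.Injective g := fun x y hxy => hinj (congrArg Subtype.val hxy)
  have hbij : Function.Bijective g := by
    refine (Fintype.bijective_iff_injective_and_card g).2
      ⟨hg, (Fintype.card_le_of_injective g hg).antisymm ?_⟩
    rw [Fintype.card_subtype_compl, Fintype.card_coe]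
    omega
  let φ : S ⊕ S ≃ V :=
    (Equiv.sumCongr (Equiv.refl S) (Equiv.ofBijective g hbij)).trans (Equiv.sumCompl (· ∈ S))
  refine ⟨fun v => φ (φ.symm v).swap, fun v => by simp, fun v => ?_⟩
  obtain ⟨s | s, rfl⟩ := φ.surjective v <;> simp only [Equiv.symm_apply_apply]
  exacts [hf s, (hf s).symm]

/-- A perfect matching such that every neighbour of a vertex is adjacent to every neighbour of its
partner, encoded as the involution `σ` that exchanges partners. By a theorem of Favaron these are
the perfect matchings of very well covered graphs. -/
structure IsFavaronMatching (G : SimpleGraph V) (σ : V → V) : Prop where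
  involutive : σ.Involutive
  adj : ∀ v, G.Adj v (σ v)
  adj_of_adj : ∀ ⦃x a b⦄, G.Adj x a → G.Adj (σ x) b → G.Adj a b

/- If `a` and `b` were not adjacent, they would lie in an independent set containing half of the
vertices, hence meeting the pair `{x, σ x}`. -/
lemma WellCovered.isFavaronMatching (hG : WellCovered G) {S : Finset V} (hS : IsIndepFinset G S)
    (hcard : Fintype.card V ≤ 2 * S.card) {σ : V → V} (hinv : σ.Involutive)
    (hadj : ∀ v, G.Adj v (σ v)) : IsFavaronMatching G σ := by
  refine ⟨hinv, hadj, fun x a b hxa hxb => ?_⟩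
  by_contra hab
  obtain ⟨T, habT, hT, hmax⟩ := hG.exists_superset (S := {a, b})
    (by simp [IsIndepFinset, hab, adj_comm])
  have hdisj : Disjoint T (T.image σ) := Finset.disjoint_left.2 fun y hy hy' => by
    obtain ⟨z, hz, rfl⟩ := Finset.mem_image.1 hy'
    exact hT z hz _ hy (hadj z)
  have huniv : T ∪ T.image σ = Finset.univ := by
    refine Finset.eq_univ_of_card _ ((Finset.card_le_univ _).antisymm ?_)
    rw [Finset.card_union_of_disjoint hdisj, Finset.card_image_of_injective _ hinv.injective]
    have := hmax S hS
    omega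
  obtain hx | hx := Finset.mem_union.1 (huniv ▸ Finset.mem_univ x)
  · exact hT x hx a (habT (by simp)) hxa
  · obtain ⟨y, hy, rfl⟩ := Finset.mem_image.1 hx
    exact hT y hy b (habT (by simp)) (hinv y ▸ hxb)

theorem WellCovered.exists_isFavaronMatching (hG : WellCovered G) (hnbr : ∀ v, ∃ w, G.Adj v w)
    {S : Finset V} (hS : IsIndepFinset G S) (hcard : Fintype.card V ≤ 2 * S.card) :
    ∃ σ, IsFavaronMatching G σ := by
  obtain ⟨σ, hinv, hadj⟩ := hS.exists_involutive_adj hcard fun X hXS =>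
    hG.card_le_card_biUnion_neighborFinset hnbr X (hS.mono hXS)
  exact ⟨σ, hG.isFavaronMatching hS hcard hinv hadj⟩

theorem Unicyclic.exists_isFavaronMatching (hG : Unicyclic G) (hwc : WellCovered G)
    (heven : Even (Fintype.card V)) : ∃ σ, IsFavaronMatching G σ := by
  obtain ⟨S, hS, hcard⟩ := hG.exists_isIndepFinset_card_le
  obtain ⟨m, hm⟩ := heven
  exact hwc.exists_isFavaronMatching
    (fun v => (G.degree_pos_iff_exists_adj v).1 (hG.degree_pos v)) hS (by omega)

end WellCovered

/-! ### Reduction to a corona -/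

lemma eq_of_isAcyclic {G : SimpleGraph V} (hG : G.IsAcyclic) {p q r s : V} (hpr : p ≠ r)
    (hpq : G.Adj p q) (hqr : G.Adj q r) (hps : G.Adj p s) (hsr : G.Adj s r) : q = s := by
  have hq : (Walk.cons hpq (Walk.cons hqr Walk.nil)).IsPath := by
    simp [hpq.ne, hqr.ne, hpr]
  have hs : (Walk.cons hps (Walk.cons hsr Walk.nil)).IsPath := by
    simp [hps.ne, hsr.ne, hpr]
  have heq := (hG.subsingleton_path p r).elim ⟨_, hq⟩ ⟨_, hs⟩
  simp only [Subtype.mk.injEq, Walk.cons.injEq] at heq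
  exact heq.1

lemma indepPoly_moveEdge_eq [Fintype V] {G : SimpleGraph V} {u b w : V} (huw : u ≠ w)
    (hub : G.Adj u b) (hnw : ¬ G.Adj u w) (hw : ∀ y, G.Adj w y → G.Adj u y)
    (hb : ∀ y, G.Adj b y → y = u ∨ y = w ∨ G.Adj u y) :
    indepPoly (moveEdge G u b w) = indepPoly G := by
  set R : Finset V := {y | y ≠ u ∧ y ≠ w ∧ ¬ G.Adj u y} with hR
  have hold : {y ∈ Finset.univ.erase u | ¬ G.Adj u y} = insert w R := by
    ext y
    simp only [Finset.mem_filter, Finset.mem_erase, Finset.mem_univ, Finset.mem_insert, hR]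
    grind
  have hnew : {y ∈ Finset.univ.erase u | ¬ (moveEdge G u b w).Adj u y} = insert b R := by
    ext y
    simp only [Finset.mem_filter, Finset.mem_erase, Finset.mem_univ, Finset.mem_insert, hR,
      moveEdge_adj_left huw]
    grind [hub.ne]
  refine Polynomial.funext fun t => ?_
  rw [eval_indepPoly, eval_indepPoly, indepSum_moveEdge, indepSum_erase G (Finset.mem_univ u),
    hold, hnew, indepSum_insert_isolated, indepSum_insert_isolated]
  · simp [hR]
  · exact fun y hy hwy => (Finset.mem_filter.1 hy).2.2.2 (hw y hwy)
  · simp [hR, hub]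
  · intro y hy hby
    obtain ⟨-, hyu, hyw, hny⟩ := Finset.mem_filter.1 hy
    obtain h | h | h := hb y hby
    exacts [hyu h, hyw h, hny h]

lemma nonempty_corona_induce_iso {G : SimpleGraph V} {C : Set V} (σ : Equiv.Perm V)
    (hσ : ∀ v, v ∈ C ↔ σ v ∈ Cᶜ) (hleaf : ∀ v ∈ C, ∀ w, G.Adj (σ v) w ↔ w = v) :
    Nonempty (corona (G.induce C) ≃g G) := by
  let φ : C ⊕ C ≃ V :=
    (Equiv.sumCongr (Equiv.refl C) (σ.subtypeEquiv hσ)).trans (Equiv.Set.sumCompl C)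
  have hl : ∀ v : C, φ (Sum.inl v) = v := fun v => rfl
  have hr : ∀ v : C, φ (Sum.inr v) = σ v := fun v => rfl
  refine ⟨φ, @fun v w => ?_⟩
  rcases v with v | v <;> rcases w with w | w
  · simp only [hl, corona_adj_inl_inl, comap_adj, Function.Embedding.subtype_apply]
  · rw [hl, hr, corona_adj_inl_inr, adj_comm, hleaf w w.2, Subtype.ext_iff]
  · rw [hl, hr, corona_adj_inr_inl, hleaf v v.2, Subtype.ext_iff]
  · rw [hr, hr, hleaf v v.2, iff_false_right not_corona_adj_inr_inr]
    exact fun h => (hσ w).1 w.2 (h ▸ v.2)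

section Reduction

variable [Fintype V] {G : SimpleGraph V} {σ : V → V} {a b c : V}

lemma degree_eq_one_iff_of_adj {v w : V} (hvw : G.Adj v w) :
    G.degree v = 1 ↔ ∀ y, G.Adj v y → y = w := by
  rw [degree_eq_one_iff_existsUnique_adj]
  exact ⟨fun h y hy => h.unique hy hvw, fun h => ⟨w, hvw, h⟩⟩

lemma Unicyclic.of_iso [Fintype W] {H : SimpleGraph W} (hG : Unicyclic G) (φ : H ≃g G) :
    Unicyclic H :=
  ⟨φ.connected_iff.2 hG.1, by
    rw [← Nat.card_coe_set_eq, Nat.card_congr φ.mapEdgeSet, Nat.card_coe_set_eq, hG.2,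
      Fintype.card_congr φ.toEquiv]⟩

lemma Unicyclic.degree_ne_one_of_adj (hG : Unicyclic G) {v w : V} (hvw : G.Adj v w)
    (hv : G.degree v = 1) : G.degree w ≠ 1 := fun hw => by
  rw [degree_eq_one_iff_of_adj hvw] at hv
  rw [degree_eq_one_iff_of_adj hvw.symm] at hw
  have huniv : (({v, w} : Finset V) : Set V) = Set.univ := by
    refine eq_univ_of_forall_adj_mem hG.1 ⟨v, by simp⟩ fun x hx y hxy => ?_
    simp only [Finset.coe_insert, Finset.coe_singleton, Set.mem_insert_iff,
      Set.mem_singleton_iff] at hx ⊢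
    obtain rfl | rfl := hx
    exacts [Or.inr (hv y hxy), Or.inl (hw y hxy)]
  have hcard := Finset.card_le_two (a := v) (b := w)
  rw [Finset.coe_eq_univ.1 huniv, Finset.card_univ] at hcard
  linarith [hG.three_le_card]

lemma Unicyclic.exists_corona_iso (hG : Unicyclic G) (hinv : σ.Involutive)
    (hadj : ∀ v, G.Adj v (σ v)) (hleaf : ∀ v, G.degree v = 1 ∨ G.degree (σ v) = 1) :
    ∃ (C : Set V) (H : SimpleGraph C), Unicyclic H ∧ 2 * Fintype.card C = Fintype.card V ∧
      Nonempty (corona H ≃g G) := by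
  obtain ⟨C, hC⟩ : ∃ C : Set V, ∀ v, v ∈ C ↔ G.degree v ≠ 1 := ⟨_, fun _ => Iff.rfl⟩
  have hσ : ∀ v, v ∈ C ↔ σ v ∈ Cᶜ := fun v => by
    rw [Set.mem_compl_iff, hC, hC, not_not]
    exact ⟨(hleaf v).resolve_left, hG.degree_ne_one_of_adj (hadj v).symm⟩
  obtain ⟨φ⟩ := nonempty_corona_induce_iso (hinv.toPerm σ) hσ fun v hv w =>
    ⟨(degree_eq_one_iff_of_adj (hadj v).symm).1 ((hleaf v).resolve_left ((hC v).1 hv)) w,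
      fun h => h ▸ (hadj v).symm⟩
  refine ⟨C, G.induce C, (hG.of_iso φ).of_corona, ?_, ⟨φ⟩⟩
  rw [← Fintype.card_congr φ.toEquiv, Fintype.card_sum, two_mul]

lemma Unicyclic.isAcyclic_deleteEdges_of_square (hG : Unicyclic G) {p q r s : V} (hpr : p ≠ r)
    (hqs : q ≠ s) (hpq : G.Adj p q) (hqr : G.Adj q r) (hrs : G.Adj r s) (hsp : G.Adj s p) :
    (G.deleteEdges {s(p, q)}).IsAcyclic := by
  have hreach : (G.deleteEdges {s(p, q)}).Reachable p q := by
    have hps : (G.deleteEdges {s(p, q)}).Adj p s := by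
      simp [hsp.symm, hqs.symm, hpq.ne]
    have hsr : (G.deleteEdges {s(p, q)}).Adj s r := by
      simp [hrs.symm, hqs.symm, hsp.ne]
    have hrq : (G.deleteEdges {s(p, q)}).Adj r q := by
      simp [hqr.symm, hpr.symm, hqr.ne']
    exact hps.reachable.trans (hsr.reachable.trans hrq.reachable)
  have hconn := hG.1.connected_delete_edge_of_not_isBridge (not_not.2 hreach)
  refine (isTree_iff_connected_and_card.2 ⟨hconn, ?_⟩).isAcyclic
  rw [Nat.card_coe_set_eq, edgeSet_deleteEdges,
    Set.ncard_sdiff_singleton_add_one (by simpa using hpq) (Set.toFinite _), hG.2,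
    Nat.card_eq_fintype_card]

/- Every neighbour of `c` other than `σ c` lies on a 4-cycle through `a`, `σ c` and `c`. -/
lemma IsFavaronMatching.neighborFinset_eq (hσ : IsFavaronMatching G σ) (hG : Unicyclic G)
    (hcb : G.Adj c b) (hb : b ≠ σ c) (hda : G.Adj (σ c) a) (ha : a ≠ c) :
    G.neighborFinset c = {σ c, b} := by
  have hba := hσ.adj_of_adj hcb hda
  have hacyc := hG.isAcyclic_deleteEdges_of_square ha hb.symm hda.symm (hσ.adj c).symm hcb hba
  ext y
  rw [mem_neighborFinset, Finset.mem_insert, Finset.mem_singleton]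
  refine ⟨fun hcy => or_iff_not_imp_left.2 fun hy => ?_, ?_⟩
  · have hya := hσ.adj_of_adj hcy hda
    refine eq_of_isAcyclic hacyc ha.symm (q := y) (s := b) ?_ ?_ ?_ ?_ <;>
      simp [*, ha.symm, (hσ.adj c).ne, hda.ne', hya.ne, hba.ne]
  · rintro (rfl | rfl)
    exacts [hσ.adj c, hcb]

lemma IsFavaronMatching.neighborFinset_apply_eq (hσ : IsFavaronMatching G σ) (hG : Unicyclic G)
    (hcb : G.Adj c b) (hb : b ≠ σ c) (hda : G.Adj (σ c) a) (ha : a ≠ c) :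
    G.neighborFinset (σ c) = {c, a} := by
  have hσc := hσ.involutive c
  simpa only [hσc] using
    hσ.neighborFinset_eq hG hda (hσc.symm ▸ ha) (hσc.symm ▸ hcb) hb

lemma IsFavaronMatching.not_adj (hσ : IsFavaronMatching G σ) (hG : Unicyclic G)
    (hcb : G.Adj c b) (hb : b ≠ σ c) (hda : G.Adj (σ c) a) (ha : a ≠ c) : ¬ G.Adj a c := fun h => by
  rw [adj_comm, ← mem_neighborFinset, hσ.neighborFinset_eq hG hcb hb hda ha,
    Finset.mem_insert, Finset.mem_singleton] at h
  exact h.elim hda.ne' (hσ.adj_of_adj hcb hda).ne'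

/- If the 4-cycle consisted of two matched pairs, it would be the whole graph. -/
lemma IsFavaronMatching.apply_ne (hσ : IsFavaronMatching G σ) (hG : Unicyclic G)
    (hcard : 4 < Fintype.card V) (hcb : G.Adj c b) (hb : b ≠ σ c) (hda : G.Adj (σ c) a)
    (ha : a ≠ c) : σ b ≠ a := by
  rintro rfl
  have hNc := hσ.neighborFinset_eq hG hcb hb hda ha
  have hNσc := hσ.neighborFinset_apply_eq hG hcb hb hda ha
  have hNb := hσ.neighborFinset_eq hG hcb.symm ha.symm hda.symm hb.symm
  have hNσb := hσ.neighborFinset_apply_eq hG hcb.symm ha.symm hda.symm hb.symm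
  have huniv : (({c, σ c, b, σ b} : Finset V) : Set V) = Set.univ := by
    refine eq_univ_of_forall_adj_mem hG.1 ⟨c, by simp⟩ fun v hv w hvw => ?_
    rw [← mem_neighborFinset] at hvw
    simp only [Finset.mem_coe, Finset.mem_insert, Finset.mem_singleton] at hv ⊢
    obtain rfl | rfl | rfl | rfl := hv
    · rw [hNc, Finset.mem_insert, Finset.mem_singleton] at hvw
      tauto
    · rw [hNσc, Finset.mem_insert, Finset.mem_singleton] at hvw
      tauto
    · rw [hNb, Finset.mem_insert, Finset.mem_singleton] at hvw
      tauto
    · rw [hNσb, Finset.mem_insert, Finset.mem_singleton] at hvw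
      tauto
  have hle := Finset.card_le_four (a := c) (b := σ c) (c := b) (d := σ b)
  rw [Finset.coe_eq_univ.1 huniv, Finset.card_univ] at hle
  omega

/- A second matched pair without a leaf would lie on a 4-cycle avoiding the edge between `c` and
`σ c`. -/
lemma IsFavaronMatching.degree_eq_one_or (hσ : IsFavaronMatching G σ) (hG : Unicyclic G)
    (hcard : 4 < Fintype.card V) (hcb : G.Adj c b) (hb : b ≠ σ c) (hda : G.Adj (σ c) a)
    (ha : a ≠ c) {x : V} (hxc : x ≠ c) (hxσc : x ≠ σ c) :
    G.degree x = 1 ∨ G.degree (σ x) = 1 := by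
  have hσxc : σ x ≠ c := fun h => hxσc (hσ.involutive.eq_iff.1 h)
  have hσxσc : σ x ≠ σ c := hσ.involutive.injective.ne hxc
  have hnbr : ∀ y, (G.Adj c y → y = σ c ∨ y = b) ∧ (G.Adj (σ c) y → y = c ∨ y = a) := fun y => by
    rw [← mem_neighborFinset, ← mem_neighborFinset, hσ.neighborFinset_eq hG hcb hb hda ha,
      hσ.neighborFinset_apply_eq hG hcb hb hda ha]
    simp only [Finset.mem_insert, Finset.mem_singleton, imp_self, and_self]
  have hacyc := hG.isAcyclic_deleteEdges_of_square ha.symm hb.symm (hσ.adj c) hda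
    (hσ.adj_of_adj hcb hda).symm hcb.symm
  rw [degree_eq_one_iff_of_adj (hσ.adj x), degree_eq_one_iff_of_adj (hσ.adj x).symm]
  by_contra! h
  obtain ⟨⟨y, hxy, hy⟩, z, hσxz, hz⟩ := h
  have hyz : s(y, z) ≠ s(c, σ c) := fun h => by
    have hσba := hσ.apply_ne hG hcard hcb hb hda ha
    obtain ⟨rfl, rfl⟩ | ⟨rfl, rfl⟩ := Sym2.eq_iff.1 h
    · obtain rfl := ((hnbr x).1 hxy.symm).resolve_left hxσc
      exact hσba (((hnbr _).2 hσxz.symm).resolve_left hσxc)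
    · obtain rfl := ((hnbr x).2 hxy.symm).resolve_left hxc
      exact hσba (hσ.involutive.eq_iff.1 (((hnbr _).1 hσxz.symm).resolve_left hσxσc)).symm
  refine hy (eq_of_isAcyclic hacyc hz.symm (q := σ x) (s := y) ?_ ?_ ?_ ?_).symm
  · simp [hσ.adj x, hxc, hxσc]
  · simp [hσxz, hσxc, hσxσc]
  · simp [hxy, hxc, hxσc]
  · exact deleteEdges_adj.2 ⟨hσ.adj_of_adj hxy hσxz, hyz⟩

lemma IsFavaronMatching.exists_corona_iso_moveEdge (hσ : IsFavaronMatching G σ)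
    (hG : Unicyclic G) (hcard : 4 < Fintype.card V) (hcb : G.Adj c b) (hb : b ≠ σ c)
    (hda : G.Adj (σ c) a) (ha : a ≠ c) :
    ∃ (C : Set V) (H : SimpleGraph C), Unicyclic H ∧ 2 * Fintype.card C = Fintype.card V ∧
      Nonempty (corona H ≃g moveEdge G a (σ c) c) := by
  have hnac := hσ.not_adj hG hcb hb hda ha
  have hdeg : ∀ x, x ≠ c → x ≠ σ c → (moveEdge G a (σ c) c).degree x = G.degree x :=
    fun x hxc hxσc => by
      obtain rfl | hxa := eq_or_ne x a
      exacts [degree_moveEdge_left ha hda.symm hnac, degree_moveEdge_of_ne ha hxa hxσc hxc]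
  have hdegσc : (moveEdge G a (σ c) c).degree (σ c) = 1 := by
    have hold := degree_moveEdge_old ha hda.symm (hσ.adj c).ne'
    rw [← card_neighborFinset_eq_degree G, hσ.neighborFinset_apply_eq hG hcb hb hda ha,
      Finset.card_pair ha.symm] at hold
    omega
  have hreach : (G.deleteEdges {s(a, σ c)}).Reachable c (σ c) := by
    refine Adj.reachable (deleteEdges_adj.2 ⟨hσ.adj c, ?_⟩)
    simp [ha.symm, (hσ.adj c).ne]
  refine (unicyclic_moveEdge hG ha hda.symm hnac hreach).exists_corona_iso hσ.involutive
    (fun v => ?_) fun v => ?_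
  · obtain rfl | hva := eq_or_ne v a
    · exact (moveEdge_adj_left ha).2 (Or.inl ⟨hσ.adj v, hσ.involutive.injective.ne ha⟩)
    obtain hσv | hσv := eq_or_ne (σ v) a
    · rw [hσv]
      exact (moveEdge_adj_right ha).2
        (Or.inl ⟨hσv ▸ hσ.adj v, fun h => ha (by rw [← hσv, h, hσ.involutive c])⟩)
    · exact (moveEdge_adj_of_ne hva hσv).2 (hσ.adj v)
  · obtain rfl | hvc := eq_or_ne v c
    · exact Or.inr hdegσc
    obtain rfl | hvσc := eq_or_ne v (σ c)
    · exact Or.inl hdegσc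
    rw [hdeg v hvc hvσc, hdeg (σ v) (fun h => hvσc (hσ.involutive.eq_iff.1 h))
      (hσ.involutive.injective.ne hvc)]
    exact hσ.degree_eq_one_or hG hcard hcb hb hda ha hvc hvσc

lemma IsFavaronMatching.indepPoly_moveEdge (hσ : IsFavaronMatching G σ) (hG : Unicyclic G)
    (hcb : G.Adj c b) (hb : b ≠ σ c) (hda : G.Adj (σ c) a) (ha : a ≠ c) :
    indepPoly (moveEdge G a (σ c) c) = indepPoly G := by
  refine indepPoly_moveEdge_eq ha hda.symm (hσ.not_adj hG hcb hb hda ha) (fun y hy => ?_)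
    fun y hy => ?_
  · rw [← mem_neighborFinset, hσ.neighborFinset_eq hG hcb hb hda ha, Finset.mem_insert,
      Finset.mem_singleton] at hy
    obtain rfl | rfl := hy
    exacts [hda.symm, (hσ.adj_of_adj hcb hda).symm]
  · rw [← mem_neighborFinset, hσ.neighborFinset_apply_eq hG hcb hb hda ha, Finset.mem_insert,
      Finset.mem_singleton] at hy
    tauto

theorem Unicyclic.exists_indepPoly_eq_corona (hG : Unicyclic G) (hwc : WellCovered G)
    (heven : Even (Fintype.card V)) (hcard : 4 < Fintype.card V) :
    ∃ (C : Set V) (H : SimpleGraph C), Unicyclic H ∧ 2 * Fintype.card C = Fintype.card V ∧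
      indepPoly G = indepPoly (corona H) := by
  obtain ⟨σ, hσ⟩ := hG.exists_isFavaronMatching hwc heven
  by_cases hleaf : ∀ v, G.degree v = 1 ∨ G.degree (σ v) = 1
  · obtain ⟨C, H, hH, hCcard, ⟨φ⟩⟩ := hG.exists_corona_iso hσ.involutive hσ.adj hleaf
    exact ⟨C, H, hH, hCcard, (indepPoly_congr φ).symm⟩
  push Not at hleaf
  obtain ⟨c, hc, hσc⟩ := hleaf
  simp only [ne_eq, degree_eq_one_iff_of_adj (hσ.adj c), degree_eq_one_iff_of_adj (hσ.adj c).symm,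
    not_forall] at hc hσc
  obtain ⟨b, hcb, hb⟩ := hc
  obtain ⟨a, hda, ha⟩ := hσc
  obtain ⟨C, H, hH, hCcard, ⟨φ⟩⟩ := hσ.exists_corona_iso_moveEdge hG hcard hcb hb hda ha
  exact ⟨C, H, hH, hCcard, by rw [← hσ.indepPoly_moveEdge hG hcb hb hda ha, indepPoly_congr φ]⟩

end Reduction

end

/-- If `G` is a connected well-covered unicyclic graph of order `2n` (`n ≥ 3`),
then `ξ(C_n*) ≤ ξ(G) ≤ ξ(U_n*)`. -/
theorem stmt9 {V : Type*} [Fintype V] (n : ℕ) (hn : 3 ≤ n) (G : SimpleGraph V)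
    (hcard : Fintype.card V = 2 * n) (hG : Unicyclic G) (hwc : WellCovered G) :
    xi (corona (cycleGraph n)) ≤ xi G ∧ xi G ≤ xi (corona (Ugraph n)) := by
  classical
  obtain ⟨C, H, hH, hCcard, hpoly⟩ :=
    hG.exists_indepPoly_eq_corona hwc ⟨n, by omega⟩ (by omega)
  obtain rfl : n = Fintype.card C := by omega
  have hxi : xi G = xi (corona H) := by rw [xi, xi, hpoly]
  have := hH.nonempty
  have : Nonempty (Fin (Fintype.card C)) := ⟨0, by omega⟩
  rw [hxi]
  exact ⟨xi_corona_mono hH.pre_cycleGraph.xi_le, xi_corona_mono hH.pre_Ugraph.xi_le⟩
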